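/- arXiv:2103.14789 — 5 statements merged into one kernel-verified Lean document; each statement's English description precedes it below -/
import Mathlib

section
/- Let N be a positive integer and let A be a real symmetric N×N matrix with eigenvalues λ_1² < λ_2² < ... < λ_N², where 0 < λ_1 < ... < λ_N, and with an orthonormal basis of eigenvectors ψ_j satisfying A ψ_j = λ_j² ψ_j. Let ω > 0 be such that δ_h := min_j |λ_j − ω| / ω > 0. Let Δt > 0 satisfy T := 2π/ω = M Δt for a positive integer M, together with Δt ≤ 2/(λ_N + 2ω/π) and ω Δt ≤ min(δ_h, 1). Set ω̃ := sin(ω Δt/2)/(Δt/2) and let f ∈ ℝ^N. Let ν^∞ ∈ ℝ^N be a solution of (ω̃² I − A) ν^∞ = ω f. For initial data ν ∈ ℝ^N define the leapfrog sequence u^0 = ν, u^1 = ν − (Δt²/2)(A ν + ω f), and u^{n+1} = 2u^n − u^{n−1} − Δt² A u^n − Δt² ω cos(ω n Δt) f for n ≥ 1, and define the discrete filter Π_h ν := (2Δt/T) Σ_{n=0}^{M} η_n (cos(ω n Δt) − 1/4) u^n, where η_0 = η_M = 1/2 and η_n = 1 otherwise. Then the iteration ν^{(k+1)} = Π_h ν^{(k)}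 with ν^{(0)} = 0 converges to ν^∞; more precisely, with ρ_h := max(1 − 0.3 δ_h², 0.63) one has ‖ν^{(k)} − ν^∞‖ ≤ ρ_h^k ‖ν^∞‖ for all k ≥ 0, so ν^{(k)} → ν^∞ as k → ∞. -/
open Real Filter Finset

lemma wh_cot_le (t : ℝ) (h0 : 0 < t) (h1 : t < π / 2) : cos t / sin t ≤ 1 / t := by
  have hs : 0 < sin t := sin_pos_of_pos_of_lt_pi h0 (by linarith)
  have hc : 0 < cos t := cos_pos_of_mem_Ioo ⟨by linarith, h1⟩
  have := Real.lt_tan h0 h1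
  rw [tan_eq_sin_div_cos, lt_div_iff₀ hc] at this
  rw [div_le_div_iff₀ hs h0]; linarith

lemma wh_cot_anti (s t : ℝ) (h0 : 0 < s) (h1 : s ≤ t) (h2 : t < π) :
    cos t / sin t ≤ cos s / sin s := by
  have hs : 0 < sin s := sin_pos_of_pos_of_lt_pi h0 (by linarith)
  have ht : 0 < sin t := sin_pos_of_pos_of_lt_pi (by linarith) h2
  rw [div_le_div_iff₀ ht hs]
  have : 0 ≤ sin (t - s) := sin_nonneg_of_nonneg_of_le_pi (by linarith) (by linarith)
  rw [sin_sub] at this; linarith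

/-- regime 3 -/
lemma wh_r3 (m a x S : ℝ) (hm : 1 ≤ m) (hma : m * a = π) (ha : 0 < a) (ha2 : a ≤ 1/2)
    (hx : 3 * a / 2 ≤ x) (hx2 : x ≤ π / 2) (hS : |S| ≤ 1) :
    |S / m * (1/2 * (cos (x+a) / sin (x+a)) + 1/2 * (cos (x-a) / sin (x-a))
      - 1/4 * (cos x / sin x))| ≤ 0.63 := by
  have hpi := Real.pi_gt_d2
  have h1 := wh_cot_le (x - a) (by linarith) (by linarith)
  have h2 := wh_cot_anti (x - a) x (by linarith) (by linarith) (by linarith)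
  have h3 := wh_cot_anti x (x+a) (by linarith) (by linarith) (by linarith)
  have h4 := wh_cot_anti (x+a) (3 * π / 4) (by linarith) (by linarith) (by linarith)
  have h5 : cos (3 * π / 4) / sin (3 * π / 4) = -1 := by
    have e : 3 * π / 4 = π - π / 4 := by ring
    rw [e, cos_pi_sub, sin_pi_sub, cos_pi_div_four, sin_pi_div_four, neg_div, div_self]
    positivity
  have h6 : 0 ≤ cos x / sin x := div_nonneg (cos_nonneg_of_mem_Icc ⟨by linarith, hx2⟩)
    (sin_nonneg_of_nonneg_of_le_pi (by linarith) (by linarith))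
  have h7 : 1 / (x - a) ≤ 2 / a := by
    rw [div_le_div_iff₀ (by linarith) ha]; linarith
  have h8 : 2 / a ≤ 0.64 * m := by
    rw [div_le_iff₀ ha]; nlinarith
  set G := (1/2 * (cos (x+a) / sin (x+a)) + 1/2 * (cos (x-a) / sin (x-a))
      - 1/4 * (cos x / sin x)) with hG
  have hGm : |G| ≤ 0.63 * m := by
    rw [abs_le]; constructor <;> linarith
  rw [abs_mul, abs_div, abs_of_pos (by linarith : 0 < m), div_mul_eq_mul_div, div_le_iff₀ (by linarith)]
  calc |S| * |G| ≤ 1 * |G| := by gcongr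
    _ ≤ _ := by linarith

lemma wh_sin_lower (z c : ℝ) (h0 : 0 < z) (h1 : z ≤ c) (hc : c ≤ 1) :
    z * (1 - c ^ 2 / 4) ≤ sin z := by
  have := Real.sin_gt_sub_cube h0
  have h : z ^ 2 ≤ c ^ 2 := by gcongr
  nlinarith

/-- regime 2 -/
lemma wh_r2 (m a x : ℝ) (hm : 1 ≤ m) (hma : m * a = π) (ha : 0 < a) (ha2 : a ≤ 1/2)
    (hx : 0 < x) (hx2 : x ≤ a / 2) :
    |sin (2 * m * x) / m * (1/2 * (cos (x+a) / sin (x+a)) + 1/2 * (cos (x-a) / sin (x-a))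
      - 1/4 * (cos x / sin x))| ≤ 0.63 := by
  have hpi := Real.pi_gt_d2
  have hm0 : 0 < m := by linarith
  have h1 := wh_cot_le x hx (by linarith)
  have h2 := wh_cot_anti (a - x) (x + a) (by linarith) (by linarith) (by linarith)
  have h6 : 0 ≤ cos x / sin x := div_nonneg (cos_nonneg_of_mem_Icc ⟨by linarith, by linarith⟩)
    (sin_nonneg_of_nonneg_of_le_pi (by linarith) (by linarith))
  have e1 : cos (x - a) / sin (x - a) = - (cos (a - x) / sin (a - x)) := by
    rw [← neg_sub a x, cos_neg, sin_neg, div_neg]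
  have s1 := wh_sin_lower (a - x) (1/2) (by linarith) (by linarith) (by norm_num)
  have s2 := wh_sin_lower (x + a) (3/4) (by linarith) (by linarith) (by norm_num)
  have s1p : 0 < sin (a - x) := sin_pos_of_pos_of_lt_pi (by linarith) (by linarith)
  have s2p : 0 < sin (x + a) := sin_pos_of_pos_of_lt_pi (by linarith) (by linarith)
  have s3 : 0.6 * a ^ 2 ≤ sin (a - x) * sin (x + a) := by
    calc 0.6 * a ^ 2 ≤ ((a - x) * (1 - (1/2) ^ 2 / 4)) * ((x+a) * (1 - (3/4) ^ 2 / 4)) := by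
          nlinarith
      _ ≤ _ := by
          apply mul_le_mul s1 s2 _ s1p.le
          apply mul_nonneg (by linarith) (by norm_num)
  have e2 : cos (a - x) / sin (a - x) - cos (x + a) / sin (x + a)
      = sin (2 * x) / (sin (a - x) * sin (x + a)) := by
    rw [div_sub_div _ _ s1p.ne' s2p.ne', show 2 * x = (x + a) - (a - x) by ring, sin_sub (x+a)]
    ring
  have h3 : cos (a - x) / sin (a - x) - cos (x + a) / sin (x + a) ≤ 2 * x / (0.6 * a ^ 2) := by
    rw [e2]
    apply div_le_div₀ (by linarith) (sin_le (by linarith)) (by positivity) s3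
  have hmx : 2 * m * x ≤ π := by nlinarith
  set S := sin (2 * m * x) with hS
  have hS0 : 0 ≤ S := sin_nonneg_of_nonneg_of_le_pi (by positivity) hmx
  have hS1 : S ≤ 1 := sin_le_one _
  have hS2 : S ≤ 2 * m * x := sin_le (by positivity)
  have hG : 1/2 * (cos (x+a) / sin (x+a)) + 1/2 * (cos (x-a) / sin (x-a))
      - 1/4 * (cos x / sin x) = - (1/4 * (cos x / sin x) +
        1/2 * (cos (a - x) / sin (a - x) - cos (x + a) / sin (x + a))) := by
    rw [e1]; ring
  rw [hG, mul_neg, abs_neg, abs_of_nonneg (mul_nonneg (div_nonneg hS0 hm0.le) (by linarith))]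
  have hr : x / a ≤ 1 / 2 := by rw [div_le_iff₀ ha]; linarith
  have hr0 : 0 < x / a := by positivity
  calc _ ≤ S / m * (1/4 * (1/x) + 1/2 * (2 * x / (0.6 * a ^ 2))) := by
        apply mul_le_mul_of_nonneg_left _ (div_nonneg hS0 hm0.le)
        linarith
    _ = S / (4 * m * x) + S * (x / a) / (0.6 * (m * a)) := by field_simp
    _ ≤ 0.63 := by
        rw [hma]
        have hb : S * (x / a) / (0.6 * π) ≤ 0.531 * (x/a) := by
          rw [div_le_iff₀ (by positivity)]
          have : S * (x/a) ≤ 1 * (x/a) := by gcongr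
          have : 1 * (x/a) ≤ (0.531 * (0.6 * π)) * (x/a) := by
            gcongr; linarith
          linarith
        rcases le_total (x/a) 0.235 with h | h
        · have : S / (4 * m * x) ≤ 1/2 := by
            rw [div_le_iff₀ (by positivity)]; linarith
          linarith
        · have : S / (4 * m * x) ≤ 0.34 := by
            rw [div_le_iff₀ (by positivity)]
            rw [le_div_iff₀ ha] at h
            have : m * (0.235 * a) ≤ m * x := by gcongr
            nlinarith
          linarith

lemma wh_P (m a y : ℝ) (hm : 1 ≤ m) (hma : m * a = π) (ha : 0 < a) (ha2 : a ≤ 1/2)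
    (hy : 0 < y) (hy2 : y ≤ a / 2) :
    0 ≤ sin (2 * m * y) / m * (1/2 * (cos y / sin y)) ∧
    sin (2 * m * y) / m * (1/2 * (cos y / sin y)) ≤ 1 - 2 * (y / a) ^ 2 := by
  have hpi := Real.pi_gt_d2
  have hm0 : 0 < m := by linarith
  have h1 := wh_cot_le y hy (by linarith)
  have h6 : 0 ≤ cos y / sin y := div_nonneg (cos_nonneg_of_mem_Icc ⟨by linarith, by linarith⟩)
    (sin_nonneg_of_nonneg_of_le_pi (by linarith) (by linarith))
  have hmy : m * y ≤ π / 2 := by nlinarith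
  have hmy0 : 0 < m * y := by positivity
  have hc := Real.cos_nonneg_of_mem_Icc (x := m * y) ⟨by linarith, by linarith⟩
  have hs := Real.sin_nonneg_of_nonneg_of_le_pi hmy0.le (by linarith)
  have hs1 := Real.sin_le hmy0.le
  have hS : sin (2 * m * y) = 2 * sin (m * y) * cos (m * y) := by
    rw [← sin_two_mul]; ring_nf
  rw [hS]
  constructor
  · positivity
  · have hq := Real.cos_le_one_sub_mul_cos_sq (x := m * y) (by rw [abs_of_pos hmy0]; linarith)
    have e : 2 / π ^ 2 * (m * y) ^ 2 = 2 * (y / a) ^ 2 := by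
      rw [← hma]; field_simp
    rw [e] at hq
    calc _ ≤ 2 * sin (m * y) * cos (m * y) / m * (1/2 * (1 / y)) := by gcongr
      _ = cos (m * y) * (sin (m * y) / (m * y)) := by field_simp
      _ ≤ cos (m * y) * 1 := by
          gcongr
          rw [div_le_one hmy0]; exact hs1
      _ ≤ _ := by linarith

lemma wh_P' (m a y : ℝ) (hm : 1 ≤ m) (hma : m * a = π) (ha : 0 < a) (ha2 : a ≤ 1/2)
    (hy : y ≠ 0) (hy2 : |y| ≤ a / 2) :
    0 ≤ sin (2 * m * y) / m * (1/2 * (cos y / sin y)) ∧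
    sin (2 * m * y) / m * (1/2 * (cos y / sin y)) ≤ 1 - 2 * (y / a) ^ 2 := by
  rcases lt_or_gt_of_ne hy with h | h
  · have := wh_P m a (-y) hm hma ha ha2 (by linarith) (by rwa [abs_of_neg h] at hy2)
    rw [mul_neg, sin_neg, sin_neg, cos_neg] at this
    convert this using 2 <;> ring
  · exact wh_P m a y hm hma ha ha2 h (by rwa [abs_of_pos h] at hy2)

lemma wh_g (X Z : ℝ) (hX : sin X ≠ 0) (hZ : sin Z ≠ 0) :
    1/2 * (cos Z / sin Z) - 1/4 * (cos X / sin X)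
      = (sin (X + Z) - 3 * sin (Z - X)) / (8 * (sin X * sin Z)) := by
  rw [sin_add, sin_sub]
  field_simp
  ring

lemma wh_arith (s a : ℝ) (hs : 0 < s) (ha : 0 < a) (ha2 : a ≤ 1/2) (h : a ≤ 0.64 * s) :
    s * (8 * a ^ 2 + 4 * s) / 5.04 ≤ 1.5 * s ^ 2 := by
  have h2 : a ^ 2 ≤ 0.32 * s := by nlinarith
  have h3 : s * (8 * a ^ 2 + 4 * s) ≤ s * (8 * (0.32 * s) + 4 * s) := by gcongr
  rw [div_le_iff₀ (by norm_num)]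
  nlinarith [sq_nonneg s]

set_option maxHeartbeats 1000000 in
/-- regime 1 -/
lemma wh_r1 (m a x δ : ℝ) (hm : 1 ≤ m) (hma : m * a = π) (ha : 0 < a) (ha2 : a ≤ 1/2)
    (hx : a / 2 ≤ x) (hx2 : x ≤ 3 * a / 2) (hxa : x ≠ a) (had : 2 * a ≤ δ)
    (hδ : δ ≤ |sin x - a| / a) :
    |sin (2 * m * x) / m * (1/2 * (cos (x+a) / sin (x+a)) + 1/2 * (cos (x-a) / sin (x-a))
      - 1/4 * (cos x / sin x))| ≤ max (1 - 0.3 * δ ^ 2) 0.63 := by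
  have hpi := Real.pi_gt_d2
  have hm0 : 0 < m := by linarith
  obtain ⟨y, rfl⟩ : ∃ y, x = a + y := ⟨x - a, by ring⟩
  have hy : y ≠ 0 := fun h => hxa (by rw [h]; ring)
  have hya : |y| ≤ a / 2 := by rw [abs_le]; constructor <;> linarith
  obtain ⟨hP0, hP1⟩ := wh_P' m a y hm hma ha ha2 hy hya
  have hS : sin (2 * m * (a + y)) = sin (2 * m * y) := by
    rw [show 2 * m * (a + y) = 2 * m * y + 2 * π by rw [← hma]; ring, sin_add_two_pi]
  rw [hS, show a + y - a = y by ring]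
  have hs0 : 0 < |y| / a := by positivity
  set s := |y| / a with hs
  have hs2 : s ≤ 1/2 := by rw [hs, div_le_iff₀ ha]; linarith
  have hys : |y| = s * a := by rw [hs]; field_simp
  have hsq : (y / a) ^ 2 = s ^ 2 := by rw [hs, div_pow, div_pow, sq_abs]
  rw [hsq] at hP1
  -- δ versus s
  have hδs : δ * (101/128) ≤ s := by
    have k1 : |sin (a + y) - a| ≤ |y| + (a+y) ^ 3 / 4 := by
      have k2 := Real.sin_gt_sub_cube (x := a + y) (by linarith)
      have k3 := Real.sin_le (x := a + y) (by linarith)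
      have k4 := le_abs_self y
      have k5 := neg_abs_le y
      have k6 : 0 ≤ (a + y) ^ 3 := pow_nonneg (by linarith) 3
      rw [abs_le]; constructor <;> linarith
    have k7 : (a + y) ^ 3 ≤ (3 * a / 2) ^ 3 := pow_le_pow_left₀ (by linarith) hx2 3
    rw [le_div_iff₀ ha, ] at hδ
    have k8 : a ^ 3 ≤ δ / 4 * a := by
      have : a ^ 2 ≤ δ / 4 := by nlinarith
      nlinarith
    have : δ * (101/128) * a ≤ s * a := by nlinarith
    exact le_of_mul_le_mul_right this ha
  have hδ0 : 0 < δ := by linarith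
  have hδ2 : 0.3 * δ ^ 2 ≤ 0.5 * s ^ 2 := by
    have : (δ * (101/128)) ^ 2 ≤ s ^ 2 := by gcongr
    nlinarith
  -- the Q part
  have px : 0 < sin (a + y) := sin_pos_of_pos_of_lt_pi (by linarith) (by linarith)
  have pxa : 0 < sin (a + y + a) := sin_pos_of_pos_of_lt_pi (by linarith) (by linarith)
  have lx : 63 / 64 * (a / 2) ≤ sin (a + y) := by
    have k1 := wh_sin_lower (a/2) (1/4) (by linarith) (by linarith) (by norm_num)
    have k2 := Real.sin_le_sin_of_le_of_le_pi_div_two (x := a/2) (y := a + y)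
      (by linarith) (by linarith) (by linarith)
    linarith
  have lxa : 55 / 64 * (3 * a / 2) ≤ sin (a + y + a) := by
    have k1 := wh_sin_lower (3*a/2) (3/4) (by linarith) (by linarith) (by norm_num)
    have k2 := Real.sin_le_sin_of_le_of_le_pi_div_two (x := 3*a/2) (y := a + y + a)
      (by linarith) (by linarith) (by linarith)
    linarith
  have lprod : 0.63 * a ^ 2 ≤ sin (a + y) * sin (a + y + a) := by
    have : (63 / 64 * (a / 2)) * (55 / 64 * (3 * a / 2)) ≤ sin (a + y) * sin (a + y + a) := by
      apply mul_le_mul lx lxa _ px.le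
      positivity
    nlinarith
  have hg : 1/2 * (cos (a + y + a) / sin (a + y + a)) - 1/4 * (cos (a + y) / sin (a + y))
      = (sin (3 * a + 2 * y) - 3 * sin a) / (8 * (sin (a + y) * sin (a + y + a))) := by
    have e1 : sin (3 * a + 2 * y) = sin ((a + y) + (a + y + a)) := by ring_nf
    have e2 : sin a = sin ((a + y + a) - (a + y)) := by ring_nf
    rw [e1, e2]
    exact wh_g (a + y) (a + y + a) px.ne' pxa.ne'
  have hnum : |sin (3 * a + 2 * y) - 3 * sin a| ≤ 4 * a ^ 3 + 2 * |y| := by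
    have e1 : sin (3 * a + 2 * y) - 3 * sin a = (sin (3 * a + 2 * y) - sin (3 * a)) - 4 * sin a ^ 3 := by
      rw [sin_three_mul]; ring
    have e2 : |sin (3 * a + 2 * y) - sin (3 * a)| ≤ 2 * |y| := by
      have := Real.abs_sin_sub_sin_le (3 * a + 2 * y) (3 * a)
      rwa [add_sub_cancel_left, abs_mul, abs_two] at this
    have e3 : 0 ≤ sin a := sin_nonneg_of_nonneg_of_le_pi ha.le (by linarith)
    have e4 : sin a ^ 3 ≤ a ^ 3 := pow_le_pow_left₀ e3 (Real.sin_le ha.le) 3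
    have e5 : 0 ≤ sin a ^ 3 := by positivity
    rw [e1]; rw [abs_le] at e2 ⊢
    constructor <;> linarith
  have hQ : |sin (2 * m * y) / m * (1/2 * (cos (a + y + a) / sin (a + y + a))
      - 1/4 * (cos (a + y) / sin (a + y)))| ≤ 1.5 * s ^ 2 := by
    rw [hg, abs_mul, abs_div, abs_div, abs_of_pos hm0, abs_of_pos (by positivity : 0 < 8 * (sin (a + y) * sin (a + y + a)))]
    have hSb : |sin (2 * m * y)| ≤ 2 * m * |y| := by
      have := Real.abs_sin_le_abs (x := 2 * m * y)
      rwa [abs_mul, abs_of_pos (by positivity : 0 < 2 * m)] at this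
    calc _ ≤ (2 * m * |y|) / m * ((4 * a ^ 3 + 2 * |y|) / (8 * (0.63 * a ^ 2))) := by gcongr
      _ = s * (8 * a ^ 2 + 4 * s) / 5.04 := by
          rw [hys]; field_simp; ring
      _ ≤ 1.5 * s ^ 2 := by
          exact wh_arith s a hs0 ha ha2 (by linarith)
  have hsplit : sin (2 * m * y) / m * (1/2 * (cos (a + y + a) / sin (a + y + a))
      + 1/2 * (cos y / sin y) - 1/4 * (cos (a + y) / sin (a + y)))
      = sin (2 * m * y) / m * (1/2 * (cos y / sin y)) +
        sin (2 * m * y) / m * (1/2 * (cos (a + y + a) / sin (a + y + a))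
      - 1/4 * (cos (a + y) / sin (a + y))) := by ring
  rw [hsplit]
  have hm1 := le_max_left (1 - 0.3 * δ ^ 2) 0.63
  have hm2 := le_max_right (1 - 0.3 * δ ^ 2) 0.63
  rw [abs_le] at hQ ⊢
  constructor
  · nlinarith
  · linarith [hQ.2]

lemma wh_trap_eq {f : ℕ → ℝ} (M : ℕ) (hM : 0 < M) :
    ∑ n ∈ range (M + 1), (if n = 0 ∨ n = M then (1 / 2 : ℝ) else 1) * f n
      = ∑ n ∈ range M, (f n + f (n + 1)) / 2 := by
  obtain ⟨K, rfl⟩ : ∃ K, M = K + 1 := ⟨M - 1, by omega⟩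
  have h1 : ∑ n ∈ range (K + 1), (f n + f (n + 1)) / 2
      = (∑ n ∈ range (K + 1), f n) / 2 + (∑ n ∈ range (K+1), f (n + 1)) / 2 := by
    rw [← Finset.sum_div, Finset.sum_add_distrib, add_div]
  rw [h1, Finset.sum_range_succ' f K, Finset.sum_range_succ (fun n => f (n+1)) K,
    Finset.sum_range_succ, Finset.sum_range_succ']
  have h2 : ∑ k ∈ range K, (if k + 1 = 0 ∨ k + 1 = K + 1 then (1 / 2 : ℝ) else 1) * f (k + 1)
      = ∑ k ∈ range K, f (k + 1) := by
    apply Finset.sum_congr rfl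
    intro k hk
    rw [Finset.mem_range] at hk
    rw [if_neg (by omega), one_mul]
  rw [h2]
  simp
  ring

lemma wh_trap_cos (M : ℕ) (hM : 0 < M) (p : ℝ) (hp : sin p ≠ 0) :
    ∑ n ∈ range (M + 1), (if n = 0 ∨ n = M then (1 / 2 : ℝ) else 1) * cos (n * (2 * p))
      = sin (2 * M * p) / 2 * (cos p / sin p) := by
  rw [wh_trap_eq M hM]
  clear hM
  induction M with
  | zero => simp
  | succ K ih =>
    rw [Finset.sum_range_succ, ih]
    have e1 : ((K : ℝ)) * (2 * p) = (2 * K + 1) * p - p := by ring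
    have e2 : ((K + 1 : ℕ) : ℝ) * (2 * p) = (2 * K + 1) * p + p := by push_cast; ring
    have e3 : 2 * (K : ℝ) * p = (2 * K + 1) * p - p := by ring
    have e4 : 2 * ((K + 1 : ℕ) : ℝ) * p = (2 * K + 1) * p + p := by push_cast; ring
    rw [e1, e2, e3, e4, cos_sub, cos_add, sin_sub, sin_add]
    field_simp
    ring

lemma wh_trap_one (M : ℕ) (hM : 0 < M) :
    ∑ n ∈ range (M + 1), (if n = 0 ∨ n = M then (1 / 2 : ℝ) else 1) = M := by
  have := wh_trap_eq (f := fun _ => 1) M hM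
  simpa using this

/-- The filter coefficient. -/
noncomputable def whBeta (M : ℕ) (a x : ℝ) : ℝ :=
  2 / (M : ℝ) * ∑ n ∈ range (M + 1), (if n = 0 ∨ n = M then (1 / 2 : ℝ) else 1) *
    (cos (n * (2 * a)) - 1 / 4) * cos (n * (2 * x))

lemma wh_beta_self (M : ℕ) (a : ℝ) (hM : 0 < M) (hma : M * a = π) (ha : 0 < a) (ha2 : a ≤ 1/2) :
    whBeta M a a = 1 := by
  have hpi := Real.pi_gt_d2
  have s1 : 0 < sin a := sin_pos_of_pos_of_lt_pi ha (by linarith)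
  have s2 : 0 < sin (2 * a) := sin_pos_of_pos_of_lt_pi (by linarith) (by linarith)
  have t1 := wh_trap_cos M hM a s1.ne'
  have t2 := wh_trap_cos M hM (2 * a) s2.ne'
  have t3 := wh_trap_one M hM
  have z1 : sin (2 * M * a) = 0 := by
    rw [mul_assoc, hma, sin_two_pi]
  have z2 : sin (2 * M * (2 * a)) = 0 := by
    rw [show 2 * (M:ℝ) * (2 * a) = 2 * (2 * (M * a)) by ring, hma, sin_two_mul, sin_two_pi]; simp
  rw [z1, zero_div, zero_mul] at t1
  rw [z2, zero_div, zero_mul] at t2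
  have hM' : (M : ℝ) ≠ 0 := by positivity
  unfold whBeta
  have : ∑ n ∈ range (M + 1), (if n = 0 ∨ n = M then (1 / 2 : ℝ) else 1) *
      (cos (n * (2 * a)) - 1 / 4) * cos (n * (2 * a)) = 
      1/2 * (∑ n ∈ range (M + 1), (if n = 0 ∨ n = M then (1 / 2 : ℝ) else 1)) 
      + 1/2 * (∑ n ∈ range (M + 1), (if n = 0 ∨ n = M then (1 / 2 : ℝ) else 1) * cos (n * (2 * (2 * a))))
      - 1/4 * (∑ n ∈ range (M + 1), (if n = 0 ∨ n = M then (1 / 2 : ℝ) else 1) * cos (n * (2 * a))) := by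
    rw [Finset.mul_sum, Finset.mul_sum, Finset.mul_sum, ← Finset.sum_add_distrib,
      ← Finset.sum_sub_distrib]
    apply Finset.sum_congr rfl
    intro n _
    rw [show (n : ℝ) * (2 * (2 * a)) = 2 * (n * (2 * a)) by ring, cos_two_mul]
    ring
  rw [this, t1, t2, t3]
  field_simp
  ring

lemma wh_beta_closed (M : ℕ) (a x : ℝ) (hM : 0 < M) (hma : M * a = π)
    (h1 : sin (x + a) ≠ 0) (h2 : sin (x - a) ≠ 0) (h3 : sin x ≠ 0) :
    whBeta M a x = sin (2 * M * x) / M * (1/2 * (cos (x+a) / sin (x+a))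
      + 1/2 * (cos (x-a) / sin (x-a)) - 1/4 * (cos x / sin x)) := by
  have t1 := wh_trap_cos M hM (x + a) h1
  have t2 := wh_trap_cos M hM (x - a) h2
  have t3 := wh_trap_cos M hM x h3
  rw [show 2 * (M:ℝ) * (x + a) = 2 * M * x + 2 * π by rw [← hma]; ring, sin_add_two_pi] at t1
  rw [show 2 * (M:ℝ) * (x - a) = 2 * M * x - 2 * π by rw [← hma]; ring, sin_sub_two_pi] at t2
  have hM' : (M : ℝ) ≠ 0 := by positivity
  unfold whBeta
  have : ∑ n ∈ range (M + 1), (if n = 0 ∨ n = M then (1 / 2 : ℝ) else 1) *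
      (cos (n * (2 * a)) - 1 / 4) * cos (n * (2 * x)) = 
      1/2 * (∑ n ∈ range (M + 1), (if n = 0 ∨ n = M then (1 / 2 : ℝ) else 1) * cos (n * (2 * (x + a)))) 
      + 1/2 * (∑ n ∈ range (M + 1), (if n = 0 ∨ n = M then (1 / 2 : ℝ) else 1) * cos (n * (2 * (x - a))))
      - 1/4 * (∑ n ∈ range (M + 1), (if n = 0 ∨ n = M then (1 / 2 : ℝ) else 1) * cos (n * (2 * x))) := by
    rw [Finset.mul_sum, Finset.mul_sum, Finset.mul_sum, ← Finset.sum_add_distrib,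
      ← Finset.sum_sub_distrib]
    apply Finset.sum_congr rfl
    intro n _
    rw [show (n : ℝ) * (2 * (x + a)) = n * (2 * x) + n * (2 * a) by ring,
      show (n : ℝ) * (2 * (x - a)) = n * (2 * x) - n * (2 * a) by ring, cos_add, cos_sub]
    ring
  rw [this, t1, t2, t3]
  field_simp

lemma wh_beta_bound (M : ℕ) (a x δ : ℝ) (hM : 0 < M) (hma : M * a = π) (ha : 0 < a) (ha2 : a ≤ 1/2)
    (hx : 0 < x) (hx2 : x ≤ π / 2) (had : 2 * a ≤ δ)
    (hδ : δ ≤ |sin x - a| / a) : |whBeta M a x| ≤ max (1 - 0.3 * δ ^ 2) 0.63 := by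
  have hpi := Real.pi_gt_d2
  have hm : (1:ℝ) ≤ M := by exact_mod_cast hM
  have hxa : x ≠ a := by
    rintro rfl
    have k2 := Real.sin_gt_sub_cube (x := x) (by linarith)
    have k3 := Real.sin_le (x := x) (by linarith)
    rw [le_div_iff₀ ha, abs_of_nonpos (by linarith)] at hδ
    have q1 : x ^ 2 * x ≤ x ^ 2 * (1 / 2) := by gcongr
    have q2 : 2 * x * x ≤ δ * x := by gcongr
    have q3 : 0 < x ^ 2 := by positivity
    nlinarith
  have h1 : sin (x + a) ≠ 0 := (sin_pos_of_pos_of_lt_pi (by linarith) (by linarith)).ne'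
  have h3 : sin x ≠ 0 := (sin_pos_of_pos_of_lt_pi (by linarith) (by linarith)).ne'
  have h2 : sin (x - a) ≠ 0 := by
    rw [Ne, sin_eq_zero_iff_of_lt_of_lt (by linarith) (by linarith)]
    exact sub_ne_zero.2 hxa
  rw [wh_beta_closed M a x hM hma h1 h2 h3]
  rcases le_total x (a/2) with h | h
  · exact (wh_r2 M a x hm hma ha ha2 hx h).trans (le_max_right _ _)
  rcases le_total x (3*a/2) with h' | h'
  · exact wh_r1 M a x δ hm hma ha ha2 h h' hxa had hδ
  · exact (wh_r3 M a x _ hm hma ha ha2 h' hx2 (abs_sin_le_one _)).trans (le_max_right _ _)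

lemma wh_cos_rec (t : ℝ) (n : ℕ) :
    cos (((n + 2 : ℕ) : ℝ) * t) = 2 * cos t * cos (((n + 1 : ℕ) : ℝ) * t) - cos ((n : ℝ) * t) := by
  have e1 : ((n + 2 : ℕ) : ℝ) * t = ((n + 1 : ℕ) : ℝ) * t + t := by push_cast; ring
  have e2 : (n : ℝ) * t = ((n + 1 : ℕ) : ℝ) * t - t := by push_cast; ring
  rw [e1, e2, cos_add, cos_sub]; ring

lemma wh_coord (c : ℕ → ℝ) (v F lam ω Δt a x L W : ℝ)
    (hL : Δt ^ 2 * lam ^ 2 = 2 - 2 * cos (2 * x)) (hW : Δt ^ 2 * W ^ 2 = 2 - 2 * cos (2 * a))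
    (hv : W ^ 2 * v - lam ^ 2 * v = ω * F)
    (h1 : c 1 = c 0 - Δt ^ 2 / 2 * (lam ^ 2 * c 0 + ω * F))
    (hrec : ∀ n : ℕ, c (n + 2) = 2 * c (n + 1) - c n - Δt ^ 2 * (lam ^ 2 * c (n + 1))
      - Δt ^ 2 * ω * cos (((n + 1 : ℕ) : ℝ) * (2 * a)) * F) (n : ℕ) :
    c n = cos (n * (2 * a)) * v + cos (n * (2 * x)) * (c 0 - v) := by
  have hF : Δt ^ 2 * (ω * F) = (2 * cos (2 * x) - 2 * cos (2 * a)) * v := by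
    rw [← hv]; linear_combination v * hW - v * hL
  have key : ∀ n : ℕ, c n = cos (n * (2 * a)) * v + cos (n * (2 * x)) * (c 0 - v) ∧
      c (n + 1) = cos (((n + 1 : ℕ) : ℝ) * (2 * a)) * v
        + cos (((n + 1 : ℕ) : ℝ) * (2 * x)) * (c 0 - v) := by
    intro n
    induction n with
    | zero =>
      constructor
      · simp
      · rw [zero_add, h1, Nat.cast_one, one_mul, one_mul]
        linear_combination (-1/2) * c 0 * hL - 1/2 * hF
    | succ k ih =>
      refine ⟨ih.2, ?_⟩
      rw [show k + 1 + 1 = k + 2 from rfl, hrec k, wh_cos_rec (2 * a) k, wh_cos_rec (2 * x) k]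
      have i1 := ih.1
      have i2 := ih.2
      generalize cos (((k + 1 : ℕ) : ℝ) * (2 * a)) = A1 at *
      generalize cos (((k + 1 : ℕ) : ℝ) * (2 * x)) = X1 at *
      linear_combination (-1) * i1 + (2 * cos (2 * x)) * i2 - c (k+1) * hL - A1 * hF
  exact (key n).1

lemma wh_contract {N : ℕ} (hN : 0 < N) (ψ : Fin N → EuclideanSpace ℝ (Fin N))
    (hψ : Orthonormal ℝ ψ) (ρ : ℝ) (hρ : 0 ≤ ρ) (e e' : EuclideanSpace ℝ (Fin N))
    (h : ∀ j, |inner ℝ (ψ j) e'| ≤ ρ * |inner ℝ (ψ j) e|) : ‖e'‖ ≤ ρ * ‖e‖ := by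
  haveI : Nonempty (Fin N) := ⟨⟨0, hN⟩⟩
  have hc : Fintype.card (Fin N) = Module.finrank ℝ (EuclideanSpace ℝ (Fin N)) := by simp
  have hb0 : Orthonormal ℝ (basisOfOrthonormalOfCardEqFinrank hψ hc) := by
    rw [coe_basisOfOrthonormalOfCardEqFinrank]; exact hψ
  let b := (basisOfOrthonormalOfCardEqFinrank hψ hc).toOrthonormalBasis hb0
  have hb : ∀ j, b j = ψ j := by
    intro j
    simp [b]
  apply (sq_le_sq₀ (norm_nonneg _) (by positivity)).1
  rw [mul_pow, ← b.sum_sq_norm_inner_right e', ← b.sum_sq_norm_inner_right e, Finset.mul_sum]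
  apply Finset.sum_le_sum
  intro j _
  rw [hb, ← mul_pow]
  exact pow_le_pow_left₀ (norm_nonneg _) (h j) 2

/-- Convergence of the discrete Yee-EM-WaveHoltz iteration (Theorem 1),
stated in diagonalizable matrix form. -/
theorem em_waveholtz_discrete_convergence
    (N : ℕ) (hN : 0 < N)
    (A : Matrix (Fin N) (Fin N) ℝ) (hA : A.IsSymm)
    (lam : Fin N → ℝ) (hlam_pos : ∀ j, 0 < lam j) (hlam_mono : StrictMono lam)
    (ψ : Fin N → EuclideanSpace ℝ (Fin N)) (hψ : Orthonormal ℝ ψ)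
    (heig : ∀ j, Matrix.toEuclideanLin A (ψ j) = (lam j) ^ 2 • ψ j)
    (ω : ℝ) (hω : 0 < ω)
    (δh : ℝ) (hδh_le : ∀ j, δh ≤ |lam j - ω| / ω)
    (hδh_mem : ∃ j, δh = |lam j - ω| / ω) (hδh_pos : 0 < δh)
    (Δt : ℝ) (hΔt : 0 < Δt)
    (M : ℕ) (hM : 0 < M) (hT : 2 * π / ω = (M : ℝ) * Δt)
    (hCFL : Δt ≤ 2 / (lam ⟨N - 1, Nat.sub_lt hN one_pos⟩ + 2 * ω / π))
    (hsmall : ω * Δt ≤ min δh 1)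
    (ωt : ℝ) (hωt : ωt = Real.sin (ω * Δt / 2) / (Δt / 2))
    (f : EuclideanSpace ℝ (Fin N))
    (νinf : EuclideanSpace ℝ (Fin N))
    (hνinf : ωt ^ 2 • νinf - Matrix.toEuclideanLin A νinf = ω • f)
    -- the leapfrog sequence with initial data ν
    (u : EuclideanSpace ℝ (Fin N) → ℕ → EuclideanSpace ℝ (Fin N))
    (hu0 : ∀ ν, u ν 0 = ν)
    (hu1 : ∀ ν, u ν 1 = ν - (Δt ^ 2 / 2) • (Matrix.toEuclideanLin A ν + ω • f))
    (hurec : ∀ ν, ∀ n, 1 ≤ n → u ν (n + 1) =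
      (2 : ℝ) • u ν n - u ν (n - 1) - Δt ^ 2 • Matrix.toEuclideanLin A (u ν n)
        - (Δt ^ 2 * ω * Real.cos (ω * n * Δt)) • f)
    -- the discrete filter
    (Ph : EuclideanSpace ℝ (Fin N) → EuclideanSpace ℝ (Fin N))
    (hPh : ∀ ν, Ph ν = (2 * Δt / (2 * π / ω)) •
      ∑ n ∈ Finset.range (M + 1),
        ((if n = 0 ∨ n = M then (1 / 2 : ℝ) else 1) *
          (Real.cos (ω * n * Δt) - 1 / 4)) • u ν n)
    -- the WaveHoltz iteration
    (νseq : ℕ → EuclideanSpace ℝ (Fin N))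
    (hν0 : νseq 0 = 0) (hνrec : ∀ k, νseq (k + 1) = Ph (νseq k))
    (ρh : ℝ) (hρh : ρh = max (1 - 0.3 * δh ^ 2) 0.63) :
    (∀ k, ‖νseq k - νinf‖ ≤ ρh ^ k * ‖νinf‖) ∧
      Tendsto νseq atTop (nhds νinf) := by
  have hpi := Real.pi_gt_d2
  have hω2 : ω * Δt ≤ δh := hsmall.trans (min_le_left _ _)
  have hω1 : ω * Δt ≤ 1 := hsmall.trans (min_le_right _ _)
  have hωΔ : 0 < ω * Δt := by positivity
  set a := ω * Δt / 2 with ha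
  have ha0 : 0 < a := by positivity
  have ha2 : a ≤ 1 / 2 := by rw [ha]; linarith
  have hM' : (0:ℝ) < M := by exact_mod_cast hM
  have hma : (M : ℝ) * a = π := by
    rw [div_eq_iff hω.ne'] at hT
    rw [ha]; linarith
  have hcosarg : ∀ n : ℕ, ω * n * Δt = n * (2 * a) := by intro n; rw [ha]; ring
  have hcoef : 2 * Δt / (2 * π / ω) = 2 / (M : ℝ) := by
    rw [hT]; field_simp
  have hρ1 : ρh < 1 := by
    rw [hρh]; apply max_lt
    · have := pow_pos hδh_pos 2
      linarith
    · norm_num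
  have hρ0 : 0 ≤ ρh := by
    rw [hρh]; exact le_trans (by norm_num) (le_max_right _ _)
  have hsym : (Matrix.toEuclideanLin A).IsSymmetric := by
    rw [Matrix.isSymmetric_toEuclideanLin_iff]
    unfold Matrix.IsHermitian
    rw [Matrix.conjTranspose_eq_transpose_of_trivial]
    exact hA
  have hAin : ∀ j v, inner ℝ (ψ j) (Matrix.toEuclideanLin A v) = lam j ^ 2 * inner ℝ (ψ j) v := by
    intro j v
    rw [← hsym (ψ j) v, heig j, real_inner_smul_left]
  have hcontr : ∀ ν, ‖Ph ν - νinf‖ ≤ ρh * ‖ν - νinf‖ := by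
    intro ν
    apply wh_contract hN ψ hψ ρh hρ0
    intro j
    have hlj : lam j * Δt ≤ 2 := by
      have h1 : lam j ≤ lam ⟨N - 1, Nat.sub_lt hN one_pos⟩ :=
        hlam_mono.monotone (Fin.mk_le_mk.2 (by omega) : (⟨j.1, j.2⟩ : Fin N) ≤ _)
      have h2 : 0 < 2 * ω / π := by positivity
      have h3 := hlam_pos j
      rw [le_div_iff₀ (by linarith)] at hCFL
      nlinarith
    have hlp : 0 < lam j * Δt := mul_pos (hlam_pos j) hΔt
    set x := Real.arcsin (lam j * Δt / 2) with hx
    have hsinx : Real.sin x = lam j * Δt / 2 :=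
      Real.sin_arcsin (by linarith) (by linarith)
    have hx0 : 0 < x := Real.arcsin_pos.2 (by linarith)
    have hx1 : x ≤ π / 2 := Real.arcsin_le_pi_div_two _
    have hL : Δt ^ 2 * lam j ^ 2 = 2 - 2 * Real.cos (2 * x) := by
      rw [Real.cos_two_mul, Real.cos_sq', hsinx]; ring
    have hW : Δt ^ 2 * ωt ^ 2 = 2 - 2 * Real.cos (2 * a) := by
      rw [Real.cos_two_mul, Real.cos_sq', hωt]; field_simp; ring
    have hv : ωt ^ 2 * inner ℝ (ψ j) νinf - lam j ^ 2 * inner ℝ (ψ j) νinf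
        = ω * inner ℝ (ψ j) f := by
      have := congrArg (fun z => inner ℝ (ψ j) z) hνinf
      simpa only [inner_sub_right, real_inner_smul_right, hAin] using this
    have hco := wh_coord (fun n => inner ℝ (ψ j) (u ν n)) (inner ℝ (ψ j) νinf)
      (inner ℝ (ψ j) f) (lam j) ω Δt a x 0 ωt hL hW hv
      (by simp only [hu0, hu1, inner_sub_right, inner_add_right, real_inner_smul_right, hAin])
      (by
        intro n
        have := hurec ν (n + 1) (by omega)
        simp only [this, inner_sub_right, real_inner_smul_right, hAin, Nat.add_sub_cancel, hcosarg])
    simp only [hu0] at hco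
    have hβ : inner ℝ (ψ j) (Ph ν - νinf)
        = whBeta M a x * inner ℝ (ψ j) (ν - νinf) := by
      have hs := wh_beta_self M a hM hma ha0 ha2
      rw [inner_sub_right, inner_sub_right, hPh, real_inner_smul_right, inner_sum, hcoef]
      have e : ∑ n ∈ Finset.range (M + 1), inner ℝ (ψ j)
          (((if n = 0 ∨ n = M then (1 / 2 : ℝ) else 1) *
          (Real.cos (ω * n * Δt) - 1 / 4)) • u ν n)
          = (∑ n ∈ Finset.range (M + 1), (if n = 0 ∨ n = M then (1 / 2 : ℝ) else 1) *
          (Real.cos (n * (2 * a)) - 1 / 4) * Real.cos (n * (2 * a))) * inner ℝ (ψ j) νinf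
          + (∑ n ∈ Finset.range (M + 1), (if n = 0 ∨ n = M then (1 / 2 : ℝ) else 1) *
          (Real.cos (n * (2 * a)) - 1 / 4) * Real.cos (n * (2 * x))) *
            (inner ℝ (ψ j) ν - inner ℝ (ψ j) νinf) := by
        rw [Finset.sum_mul, Finset.sum_mul, ← Finset.sum_add_distrib]
        apply Finset.sum_congr rfl
        intro n _
        rw [real_inner_smul_right, hco n, hcosarg]
        ring
      rw [e]
      unfold whBeta at hs ⊢
      linear_combination (inner ℝ (ψ j) νinf) * hs
    rw [hβ, abs_mul, hρh]
    apply mul_le_mul_of_nonneg_right _ (abs_nonneg _)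
    apply wh_beta_bound M a x δh hM hma ha0 ha2 hx0 hx1 (by rw [ha]; linarith)
    refine (hδh_le j).trans (le_of_eq ?_)
    have e : Real.sin x - a = (lam j - ω) * (Δt / 2) := by rw [hsinx, ha]; ring
    rw [e, abs_mul, abs_of_pos (by positivity : 0 < Δt / 2), ha]
    field_simp
  have hbound : ∀ k, ‖νseq k - νinf‖ ≤ ρh ^ k * ‖νinf‖ := by
    intro k
    induction k with
    | zero => simp [hν0]
    | succ k ih =>
      rw [hνrec, pow_succ]
      calc _ ≤ ρh * ‖νseq k - νinf‖ := hcontr _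
        _ ≤ ρh * (ρh ^ k * ‖νinf‖) := by gcongr
        _ = _ := by ring
  refine ⟨hbound, ?_⟩
  rw [tendsto_iff_norm_sub_tendsto_zero]
  refine squeeze_zero (fun _ => norm_nonneg _) hbound ?_
  simpa using (tendsto_pow_atTop_nhds_zero_of_lt_one hρ0 hρ1).mul_const ‖νinf‖
end

section
/- Let λ > 0, ω > 0, and Δt > 0 with λ Δt < 2, let M ≥ 3 be a positive integer with M Δt = 2π/ω =: T, and let f, ν ∈ ℝ. Define λ̃ := (2/Δt) arcsin(λ Δt/2), ω̃ := sin(ω Δt/2)/(Δt/2), assume ω̃ ≠ λ, set ν^∞ := ω f/(ω̃² − λ²), and let u^n := (ν − ν^∞) cos(λ̃ n Δt) + ν^∞ cos(ω n Δt). Define the trapezoidal weights η_0 = η_M = 1/2 and η_n = 1 for 0 < n < M, and the discrete filter transfer function β_h(μ) := (2Δt/T) Σ_{n=0}^{M} η_n cos(μ n Δt)(cos(ω n Δt) − 1/4). Then (2Δt/T) Σ_{n=0}^{M} η_n (cos(ω n Δt) − 1/4) u^n = β_h(λ̃)(ν − ν^∞) + ν^∞. -/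
open Real Finset

theorem aux_telescope (x : ℝ) (M : ℕ) :
    2 * Real.sin (x / 2) * ∑ n ∈ Finset.range M, Real.cos (n * x)
      = Real.sin (M * x - x / 2) + Real.sin (x / 2) := by
  induction M with
  | zero => simp [Real.sin_neg]
  | succ k ih =>
    rw [Finset.sum_range_succ, mul_add, ih]
    have h : ((k + 1 : ℕ) : ℝ) * x - x / 2 = k * x + x / 2 := by push_cast; ring
    rw [h, Real.sin_add, Real.sin_sub]
    ring

theorem aux_sum_zero (x : ℝ) (M k : ℕ) (h : Real.sin (x / 2) ≠ 0)
    (hk : (M : ℝ) * x = k * (2 * π)) :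
    ∑ n ∈ Finset.range M, Real.cos (n * x) = 0 := by
  have h1 := aux_telescope x M
  have h2 : Real.sin (M * x - x / 2) = - Real.sin (x / 2) := by
    rw [hk, Real.sin_nat_mul_two_pi_sub]
  rw [h2, neg_add_cancel] at h1
  exact (mul_eq_zero.mp h1).resolve_left (mul_ne_zero two_ne_zero h)

theorem aux_trap (M : ℕ) (hM : 3 ≤ M) (η : ℕ → ℝ)
    (hη : ∀ n, η n = if n = 0 ∨ n = M then (1 / 2 : ℝ) else 1)
    (g : ℕ → ℝ) (hg : g M = g 0) :
    ∑ n ∈ Finset.range (M + 1), η n * g n = ∑ n ∈ Finset.range M, g n := by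
  obtain ⟨m, rfl⟩ : ∃ m, M = m + 1 := ⟨M - 1, by omega⟩
  rw [Finset.sum_range_succ, Finset.sum_range_succ', Finset.sum_range_succ' g, hg]
  have : ∑ k ∈ Finset.range m, η (k + 1) * g (k + 1) = ∑ k ∈ Finset.range m, g (k + 1) := by
    apply Finset.sum_congr rfl
    intro k hk
    have := Finset.mem_range.mp hk
    rw [hη, if_neg (by omega), one_mul]
  rw [this, hη 0, hη (m + 1), if_pos (Or.inl rfl), if_pos (Or.inr rfl)]
  ring

/-- Action of the trapezoidal discretization of the WaveHoltz filter on a single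
discrete leapfrog mode: the steady component `ν^∞` is reproduced exactly and the
transient component `ν - ν^∞` is multiplied by the filter factor `β_h(λ̃)`. -/
theorem discrete_filter_on_mode
    (lam ω Δt : ℝ) (hlam : 0 < lam) (hω : 0 < ω) (hΔt : 0 < Δt)
    (hcfl : lam * Δt < 2)
    (M : ℕ) (hM : 3 ≤ M) (hT : (M : ℝ) * Δt = 2 * π / ω)
    (f ν : ℝ)
    (lamt : ℝ) (hlamt : lamt = (2 / Δt) * Real.arcsin (lam * Δt / 2))
    (ωt : ℝ) (hωt : ωt = Real.sin (ω * Δt / 2) / (Δt / 2))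
    (hne : ωt ≠ lam)
    (νinf : ℝ) (hνinf : νinf = ω * f / (ωt ^ 2 - lam ^ 2))
    (u : ℕ → ℝ)
    (hu : ∀ n : ℕ, u n = (ν - νinf) * Real.cos (lamt * n * Δt)
      + νinf * Real.cos (ω * n * Δt))
    (η : ℕ → ℝ) (hη : ∀ n, η n = if n = 0 ∨ n = M then (1 / 2 : ℝ) else 1)
    (βh : ℝ → ℝ)
    (hβh : ∀ μ, βh μ = (2 * Δt / (2 * π / ω)) *
      ∑ n ∈ Finset.range (M + 1),
        η n * Real.cos (μ * n * Δt) * (Real.cos (ω * n * Δt) - 1 / 4)) :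
    (2 * Δt / (2 * π / ω)) *
      ∑ n ∈ Finset.range (M + 1),
        η n * (Real.cos (ω * n * Δt) - 1 / 4) * u n
      = βh lamt * (ν - νinf) + νinf := by
  have hMpos : (0 : ℝ) < M := by
    have : 0 < M := by omega
    exact_mod_cast this
  have hM3 : (3 : ℝ) ≤ M := by exact_mod_cast hM
  have hθ : (M : ℝ) * (ω * Δt) = 2 * π := by
    have : (M : ℝ) * (ω * Δt) = ω * (M * Δt) := by ring
    rw [this, hT]
    field_simp
  have hθpos : 0 < ω * Δt := mul_pos hω hΔt
  have hθlt : ω * Δt < π := by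
    nlinarith [Real.pi_pos]
  have s1 : Real.sin (ω * Δt / 2) ≠ 0 :=
    (Real.sin_pos_of_pos_of_lt_pi (by linarith) (by linarith)).ne'
  have s2 : Real.sin (2 * (ω * Δt) / 2) ≠ 0 := by
    rw [mul_div_cancel_left₀ _ (two_ne_zero)]
    exact (Real.sin_pos_of_pos_of_lt_pi hθpos hθlt).ne'
  have z1 := aux_sum_zero (ω * Δt) M 1 s1 (by rw [hθ]; simp)
  have z2 := aux_sum_zero (2 * (ω * Δt)) M 2 s2 (by push_cast; linarith)
  have key : ∑ n ∈ Finset.range (M + 1),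
      η n * ((Real.cos (ω * n * Δt) - 1 / 4) * Real.cos (ω * n * Δt)) = M / 2 := by
    rw [aux_trap M hM η hη
      (fun n => (Real.cos (ω * n * Δt) - 1 / 4) * Real.cos (ω * n * Δt))]
    · have : ∀ n ∈ Finset.range M,
          (Real.cos (ω * n * Δt) - 1 / 4) * Real.cos (ω * n * Δt)
          = 1 / 2 + 1 / 2 * Real.cos (n * (2 * (ω * Δt)))
            - 1 / 4 * Real.cos (n * (ω * Δt)) := by
        intro n _
        have e1 : ω * n * Δt = n * (ω * Δt) := by ring
        have e2 : (n : ℝ) * (2 * (ω * Δt)) = 2 * (n * (ω * Δt)) := by ring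
        rw [e1, e2, Real.cos_two_mul]
        ring
      rw [Finset.sum_congr rfl this, Finset.sum_sub_distrib, Finset.sum_add_distrib,
        ← Finset.mul_sum, ← Finset.mul_sum, z1, z2]
      simp
      ring
    · have e : ω * M * Δt = 2 * π := by rw [← hθ]; ring
      simp [e]
  have hc : 2 * Δt / (2 * π / ω) * (M / 2) = 1 := by
    rw [← hT]
    field_simp
  have split : ∑ n ∈ Finset.range (M + 1),
        η n * (Real.cos (ω * n * Δt) - 1 / 4) * u n
      = (∑ n ∈ Finset.range (M + 1),
        η n * Real.cos (lamt * n * Δt) * (Real.cos (ω * n * Δt) - 1 / 4)) * (ν - νinf)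
        + (∑ n ∈ Finset.range (M + 1),
      η n * ((Real.cos (ω * n * Δt) - 1 / 4) * Real.cos (ω * n * Δt))) * νinf := by
    rw [Finset.sum_mul, Finset.sum_mul, ← Finset.sum_add_distrib]
    apply Finset.sum_congr rfl
    intro n _
    rw [hu]
    ring
  rw [split, key, hβh, mul_add, ← mul_assoc, ← mul_assoc, hc, one_mul]
end

section
/- Let ω > 0 and λ > 0 with δ := |λ − ω|/ω > 0. Let Δt > 0 satisfy T := 2π/ω = M Δt for a positive integer M, Δt ≤ 2/(λ + 2ω/π), and ω Δt ≤ min(δ, 1). Define λ̃ := (2/Δt) arcsin(λ Δt/2), the trapezoidal weights η_0 = η_M = 1/2, η_n = 1 for 0 < n < M, and the discrete filter transfer function β_h(μ) := (2Δt/T) Σ_{n=0}^{M} η_n cos(μ n Δt)(cos(ω n Δt) − 1/4). Then |β_h(λ̃)| ≤ max(1 − 0.3 δ², 0.63). -/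
open Real Finset

lemma dff_trap (φ : ℝ) (M : ℕ) :
    (∑ n ∈ Finset.range M, (Real.cos (φ * n) + Real.cos (φ * (n + 1)))) * Real.sin (φ / 2)
      = Real.sin (M * φ) * Real.cos (φ / 2) := by
  induction M with
  | zero => simp
  | succ k ih =>
    rw [Finset.sum_range_succ, add_mul, ih]
    push_cast
    have e1 : φ * (k : ℝ) = k * φ := by ring
    have e2 : φ * ((k : ℝ) + 1) = k * φ + 2 * (φ / 2) := by ring
    have e3 : ((k : ℝ) + 1) * φ = k * φ + 2 * (φ / 2) := by ring
    rw [e2, e3, e1, Real.cos_add, Real.sin_add, Real.cos_two_mul, Real.sin_two_mul]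
    linear_combination (-2 * Real.sin (k * φ) * Real.cos (φ / 2)) * Real.sin_sq_add_cos_sq (φ / 2)

lemma dff_weights (M : ℕ) (hM : 0 < M) (η : ℕ → ℝ)
    (hη : ∀ n, η n = if n = 0 ∨ n = M then (1 / 2 : ℝ) else 1) (f : ℕ → ℝ) :
    ∑ n ∈ Finset.range (M + 1), η n * f n
      = (∑ n ∈ Finset.range M, (f n + f (n + 1))) / 2 := by
  have h0 : η 0 = 1 / 2 := by simp [hη]
  have hMM : η M = 1 / 2 := by simp [hη]
  obtain ⟨m, rfl⟩ : ∃ m, M = m + 1 := ⟨M - 1, by omega⟩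
  rw [Finset.sum_range_succ, Finset.sum_range_succ', hMM, h0, Finset.sum_add_distrib,
    Finset.sum_range_succ' (fun n => f n), Finset.sum_range_succ (fun n => f (n + 1))]
  have : ∑ k ∈ Finset.range m, η (k + 1) * f (k + 1) = ∑ k ∈ Finset.range m, f (k + 1) := by
    refine Finset.sum_congr rfl fun k hk => ?_
    have hk' := Finset.mem_range.1 hk
    rw [hη, if_neg (by omega), one_mul]
  rw [this]; ring

lemma dff_mv (y z : ℝ) (hy : 0 ≤ y) (hyz : y < z) (hz : z ≤ π / 2) :
    (z - y) * Real.cos z ≤ Real.sin z - Real.sin y ∧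
    Real.sin z - Real.sin y ≤ (z - y) * Real.cos y := by
  obtain ⟨c, ⟨h1, h2⟩, h3⟩ := exists_deriv_eq_slope Real.sin hyz
    Real.continuous_sin.continuousOn Real.differentiable_sin.differentiableOn
  rw [Real.deriv_sin, eq_div_iff (by linarith)] at h3
  have hd : 0 ≤ z - y := by linarith
  have hp := Real.pi_pos
  have a1 : Real.cos z ≤ Real.cos c :=
    Real.cos_le_cos_of_nonneg_of_le_pi (by linarith) (by linarith) h2.le
  have a2 : Real.cos c ≤ Real.cos y :=
    Real.cos_le_cos_of_nonneg_of_le_pi hy (by linarith) h1.le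
  constructor <;> nlinarith

lemma dff_sin (u : ℝ) (h0 : 0 ≤ u) (h1 : u ≤ 1 / 2) :
    0 ≤ Real.sin (2 * π * u) ∧ Real.sin (2 * π * u) ≤ 2 * π * u * (1 - 2 * u ^ 2) := by
  have hp := Real.pi_pos
  have hpu : 0 ≤ π * u := by positivity
  have hpu' : π * u ≤ π / 2 := by nlinarith
  refine ⟨Real.sin_nonneg_of_nonneg_of_le_pi (by nlinarith) (by nlinarith), ?_⟩
  have e : 2 * π * u = 2 * (π * u) := by ring
  rw [e, Real.sin_two_mul]
  have b1 := Real.sin_le hpu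
  have b2 : Real.cos (π * u) ≤ 1 - 2 / π ^ 2 * (π * u) ^ 2 :=
    Real.cos_le_one_sub_mul_cos_sq (by rw [abs_of_nonneg hpu]; linarith)
  have e2 : 2 / π ^ 2 * (π * u) ^ 2 = 2 * u ^ 2 := by field_simp
  rw [e2] at b2
  have b0 := Real.sin_nonneg_of_nonneg_of_le_pi hpu (by linarith)
  have b3 : 0 ≤ 1 - 2 * u ^ 2 := by nlinarith
  have := mul_le_mul_of_nonneg_left b2 b0
  have := mul_le_mul_of_nonneg_right b1 b3
  nlinarith

/-- far field, `r > 1` -/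
lemma dff_far (r σ S B : ℝ) (hr : 1.28 ≤ r) (hσ : 0 < σ) (hσ1 : σ ≤ 1) (hS : |S| ≤ 1)
    (hB : B * (4 * π * r * (r ^ 2 - σ ^ 2)) = S * (3 * r ^ 2 + σ ^ 2)) : |B| ≤ 0.63 := by
  have hp := Real.pi_gt_d2
  have hσ2 : σ ^ 2 ≤ 1 := by nlinarith
  have hd : 0 < r ^ 2 - 1 := by nlinarith
  have hD : 0 < 4 * π * r * (r ^ 2 - σ ^ 2) :=
    mul_pos (by positivity) (by linarith)
  have h1 : |B| * (4 * π * r * (r ^ 2 - σ ^ 2)) ≤ 3 * r ^ 2 + 1 := by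
    rw [← abs_of_pos hD, ← abs_mul, hB, abs_mul, abs_of_nonneg (by positivity : 0 ≤ 3 * r ^ 2 + σ ^ 2)]
    nlinarith [sq_nonneg r, sq_nonneg σ]
  have h2 : 4 * 3.14 * r * (r ^ 2 - 1) ≤ 4 * π * r * (r ^ 2 - σ ^ 2) := by
    gcongr
  have h3 : 3 * r ^ 2 + 1 ≤ 0.63 * (4 * 3.14 * r * (r ^ 2 - 1)) := by
    nlinarith [mul_nonneg (sub_nonneg.2 hr) (sq_nonneg r), mul_nonneg (sub_nonneg.2 hr) (sub_nonneg.2 hr)]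
  by_contra h
  push Not at h
  nlinarith

/-- near field, `r > 1` -/
lemma dff_near1 (r σ S c u B : ℝ) (hr : 1 < r) (hσ : 0 < σ) (hσ1 : σ ≤ 1)
    (hu0 : 0 < u) (hu : u ≤ 1 / 2) (hc : 0 ≤ c)
    (hw1 : u * c ≤ r - σ) (hw2 : r - σ ≤ u)
    (hS0 : 0 ≤ S) (hS : S ≤ 2 * π * u * (1 - 2 * u ^ 2))
    (hB : B * (4 * π * r * (r ^ 2 - σ ^ 2)) = S * c * (3 * r ^ 2 + σ ^ 2)) :
    |B| ≤ 1 - 0.3 * (r - 1) ^ 2 := by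
  have hp := Real.pi_pos
  obtain ⟨w, hw⟩ : ∃ w, w = r - σ := ⟨_, rfl⟩
  rw [← hw] at hw1 hw2
  have hw0 : 0 < w := by linarith
  have hD : 0 < 2 * r * (r + σ) := by positivity
  have hD2 : 2 ≤ 2 * r * (r + σ) := by nlinarith
  have e1 : 4 * π * r * (r ^ 2 - σ ^ 2) = 2 * π * w * (2 * r * (r + σ)) := by rw [hw]; ring
  have e2 : 3 * r ^ 2 + σ ^ 2 = 2 * r * (r + σ) + w ^ 2 := by rw [hw]; ring
  rw [e1, e2] at hB
  obtain ⟨D, hDe⟩ : ∃ D, D = 2 * r * (r + σ) := ⟨_, rfl⟩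
  rw [← hDe] at hB hD hD2
  have hw12 : w ≤ 1 / 2 := by linarith
  have hSc : S * c ≤ 2 * π * w * (1 - 2 * w ^ 2) := by
    calc S * c ≤ 2 * π * u * (1 - 2 * u ^ 2) * c := by gcongr
      _ = 2 * π * (1 - 2 * u ^ 2) * (u * c) := by ring
      _ ≤ 2 * π * (1 - 2 * u ^ 2) * w := by
        have : 0 ≤ 1 - 2 * u ^ 2 := by linarith [pow_le_pow_left₀ hu0.le hu 2]
        gcongr
      _ = 2 * π * w * (1 - 2 * u ^ 2) := by ring
      _ ≤ 2 * π * w * (1 - 2 * w ^ 2) := by gcongr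
  have hB0 : 0 ≤ B := by
    by_contra h
    push Not at h
    have h1 : B * (2 * π * w * D) < 0 := mul_neg_of_neg_of_pos h (by positivity)
    have h2 : 0 ≤ S * c * (D + w ^ 2) := by positivity
    linarith
  rw [abs_of_nonneg hB0]
  have hq : 0 ≤ 1 - 2 * w ^ 2 := by linarith [pow_le_pow_left₀ hw0.le hw12 2]
  have h1 : (2 * π * w) * (B * D) ≤ (2 * π * w) * ((1 - 2 * w ^ 2) * (D + w ^ 2)) := by
    calc (2 * π * w) * (B * D) = S * c * (D + w ^ 2) := by rw [← hB]; ring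
      _ ≤ 2 * π * w * (1 - 2 * w ^ 2) * (D + w ^ 2) := by gcongr
      _ = _ := by ring
  have h2 : B * D ≤ (1 - 2 * w ^ 2) * (D + w ^ 2) := le_of_mul_le_mul_left h1 (by positivity)
  have h3 : (1 - 2 * w ^ 2) * (D + w ^ 2) ≤ (1 - 0.3 * w ^ 2) * D := by
    nlinarith [mul_nonneg (sq_nonneg w) (sub_nonneg.2 hD2), sq_nonneg (w ^ 2)]
  have h4 : B ≤ 1 - 0.3 * w ^ 2 := le_of_mul_le_mul_right (h2.trans h3) hD
  nlinarith

set_option maxHeartbeats 1000000 in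
/-- near field, `r < 1` -/
lemma dff_near2 (a r σ S c u B : ℝ) (ha : 0 < a) (ha2 : 2 * a ≤ 1 - r) (hr : 0 < r)
    (hσ : 1 - a ^ 2 / 4 ≤ σ) (hσ1 : σ ≤ 1) (hrσ : σ / 2 ≤ r)
    (hu0 : 0 < u) (hu : u ≤ 1 / 2) (hc : 0 ≤ c) (hc1 : c ≤ 1)
    (hw1 : u * (1 - a ^ 2 / 2) ≤ σ - r) (hw2 : σ - r ≤ u)
    (hS0 : 0 ≤ S) (hS : S ≤ 2 * π * u * (1 - 2 * u ^ 2))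
    (hB : B * (4 * π * r * (σ ^ 2 - r ^ 2)) = S * c * (3 * r ^ 2 + σ ^ 2)) :
    |B| ≤ 1 - 0.3 * (r - 1) ^ 2 := by
  have hp := Real.pi_pos
  obtain ⟨w, hw⟩ : ∃ w, w = σ - r := ⟨_, rfl⟩
  obtain ⟨d, hd⟩ : ∃ d, d = 1 - r := ⟨_, rfl⟩
  rw [← hw] at hw1 hw2
  rw [← hd] at ha2
  have hd1 : d < 1 := by linarith
  have haa : a ^ 2 ≤ d ^ 2 / 4 := by nlinarith
  have hwd : d * (15 / 16) ≤ w := by nlinarith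
  have hd0 : 0 < d := by linarith
  have hw0 : 0 < w := by nlinarith
  have hσ0 : 15 / 16 ≤ σ := by nlinarith
  have hD : 0 < 2 * r * (r + σ) := by positivity
  have hD2 : 1.3 ≤ 2 * r * (r + σ) := by nlinarith
  have e1 : 4 * π * r * (σ ^ 2 - r ^ 2) = 2 * π * w * (2 * r * (r + σ)) := by rw [hw]; ring
  have e2 : 3 * r ^ 2 + σ ^ 2 = 2 * r * (r + σ) + w ^ 2 := by rw [hw]; ring
  rw [e1, e2] at hB
  obtain ⟨D, hDe⟩ : ∃ D, D = 2 * r * (r + σ) := ⟨_, rfl⟩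
  rw [← hDe] at hB hD hD2
  have hw12 : w ≤ 1 / 2 := by linarith
  obtain ⟨k, hk⟩ : ∃ k, k = 1 - a ^ 2 / 2 := ⟨_, rfl⟩
  rw [← hk] at hw1
  have hk0 : 1 - d ^ 2 / 8 ≤ k := by rw [hk]; linarith
  have hkp : 0 < k := by nlinarith
  have hSc : S * c * k ≤ 2 * π * w * (1 - 2 * w ^ 2) := by
    have hq : 0 ≤ 1 - 2 * u ^ 2 := by linarith [pow_le_pow_left₀ hu0.le hu 2]
    calc S * c * k ≤ S * 1 * k := by gcongr
      _ ≤ 2 * π * u * (1 - 2 * u ^ 2) * 1 * k := by gcongr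
      _ = 2 * π * (1 - 2 * u ^ 2) * (u * k) := by ring
      _ ≤ 2 * π * (1 - 2 * u ^ 2) * w := by gcongr
      _ = 2 * π * w * (1 - 2 * u ^ 2) := by ring
      _ ≤ 2 * π * w * (1 - 2 * w ^ 2) := by gcongr
  have hB0 : 0 ≤ B := by
    by_contra h
    push Not at h
    have h1 : B * (2 * π * w * D) < 0 := mul_neg_of_neg_of_pos h (by positivity)
    have h2 : 0 ≤ S * c * (D + w ^ 2) := by positivity
    linarith
  rw [abs_of_nonneg hB0]
  have hq : 0 ≤ 1 - 2 * w ^ 2 := by linarith [pow_le_pow_left₀ hw0.le hw12 2]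
  have h1 : (2 * π * w) * (B * k * D) ≤ (2 * π * w) * ((1 - 2 * w ^ 2) * (D + w ^ 2)) := by
    calc (2 * π * w) * (B * k * D) = k * (B * (2 * π * w * D)) := by ring
      _ = S * c * k * (D + w ^ 2) := by rw [hB]; ring
      _ ≤ 2 * π * w * (1 - 2 * w ^ 2) * (D + w ^ 2) := by gcongr
      _ = _ := by ring
  have h2 : B * k * D ≤ (1 - 2 * w ^ 2) * (D + w ^ 2) := le_of_mul_le_mul_left h1 (by positivity)
  have h3 : (1 - 2 * w ^ 2) * (D + w ^ 2) ≤ (1 - 1.2 * w ^ 2) * D := by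
    nlinarith [mul_nonneg (sq_nonneg w) (sub_nonneg.2 hD2), sq_nonneg (w ^ 2)]
  have h4 : B * k ≤ 1 - 1.2 * w ^ 2 := le_of_mul_le_mul_right (h2.trans h3) hD
  have h5 : d ^ 2 * (225 / 256) ≤ w ^ 2 := by linarith [pow_le_pow_left₀ (by positivity) hwd 2]
  have h6 : B * k ≤ (1 - 0.3 * d ^ 2) * k := by
    have : 0 ≤ 1 - 0.3 * d ^ 2 := by linarith [pow_le_pow_left₀ hd0.le hd1.le 2]
    nlinarith [mul_le_mul_of_nonneg_left hk0 this, sq_nonneg (d ^ 2)]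
  have h7 := le_of_mul_le_mul_right h6 hkp
  have : (r - 1) ^ 2 = d ^ 2 := by rw [hd]; ring
  rw [this]; exact h7

/-- low frequencies -/
lemma dff_low (r σ S c s B : ℝ) (hr : 0 < r)
    (hσ : 15 / 16 ≤ σ) (hσ1 : σ ≤ 1)
    (hs : s ≤ 1 / 2) (hc : 0 ≤ c)
    (hw1 : s * c ≤ r) (hw2 : r ≤ s)
    (hS0 : 0 ≤ S) (hS : S ≤ 2 * π * s * (1 - 2 * s ^ 2))
    (hB : B * (4 * π * r * (σ ^ 2 - r ^ 2)) = S * c * (3 * r ^ 2 + σ ^ 2)) :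
    |B| ≤ 0.7 := by
  have hp := Real.pi_pos
  have hr2 : r ^ 2 ≤ 1 / 4 := by nlinarith
  have hσ2 : 225 / 256 ≤ σ ^ 2 := by nlinarith
  have hσ3 : σ ^ 2 ≤ 1 := by nlinarith
  have hD : 0 < 2 * (σ ^ 2 - r ^ 2) := by linarith
  have hSc : S * c ≤ 2 * π * r * (1 - 2 * r ^ 2) := by
    have hq : 0 ≤ 1 - 2 * s ^ 2 := by linarith [pow_le_pow_left₀ (hr.le.trans hw2) hs 2]
    calc S * c ≤ 2 * π * s * (1 - 2 * s ^ 2) * c := by gcongr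
      _ = 2 * π * (1 - 2 * s ^ 2) * (s * c) := by ring
      _ ≤ 2 * π * (1 - 2 * s ^ 2) * r := by gcongr
      _ = 2 * π * r * (1 - 2 * s ^ 2) := by ring
      _ ≤ 2 * π * r * (1 - 2 * r ^ 2) := by gcongr
  have e : B * (4 * π * r * (σ ^ 2 - r ^ 2)) = (2 * π * r) * (B * (2 * (σ ^ 2 - r ^ 2))) := by ring
  rw [e] at hB
  have hB0 : 0 ≤ B := by
    by_contra h
    push Not at h
    have h1 : B * (2 * (σ ^ 2 - r ^ 2)) < 0 := mul_neg_of_neg_of_pos h hD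
    have h3 : (2 * π * r) * (B * (2 * (σ ^ 2 - r ^ 2))) < 0 :=
      mul_neg_of_pos_of_neg (by positivity) h1
    have h2 : 0 ≤ S * c * (3 * r ^ 2 + σ ^ 2) := by positivity
    linarith
  rw [abs_of_nonneg hB0]
  have h1 : (2 * π * r) * (B * (2 * (σ ^ 2 - r ^ 2)))
      ≤ (2 * π * r) * ((1 - 2 * r ^ 2) * (3 * r ^ 2 + σ ^ 2)) := by
    rw [hB, ← mul_assoc]; gcongr
  have h2 := le_of_mul_le_mul_left h1 (by positivity)
  refine le_of_mul_le_mul_right (h2.trans ?_) hD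
  have hρ0 : 0 ≤ r ^ 2 := by positivity
  clear h2 h1 hB hSc hD e
  generalize r ^ 2 = ρ at *
  generalize σ ^ 2 = q at *
  nlinarith [sq_nonneg (ρ - 0.2203), mul_nonneg hρ0 (sub_nonneg.2 hσ2)]

set_option maxHeartbeats 1000000 in
lemma dff_core (a x r B : ℝ) (ha : 0 < a) (ha1 : a ≤ 1 / 2) (hx0 : 0 < x) (hx1 : x < π / 2)
    (hr : Real.sin x = r * a) (hr1 : r ≠ 1) (hsm : 2 * a ≤ |r - 1|)
    (hB : B * (4 * π * Real.sin x * (Real.sin x ^ 2 - Real.sin a ^ 2))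
      = a * Real.sin (2 * π * (x / a)) * Real.cos x * (3 * Real.sin x ^ 2 + Real.sin a ^ 2)) :
    |B| ≤ max (1 - 0.3 * (|r - 1|) ^ 2) 0.63 := by
  have hp := Real.pi_gt_three
  obtain ⟨σ, hσ⟩ : ∃ σ, Real.sin a = σ * a := ⟨Real.sin a / a, by field_simp⟩
  obtain ⟨s, hs⟩ : ∃ s, x = s * a := ⟨x / a, by field_simp⟩
  have hsx : x / a = s := by rw [hs]; field_simp
  have hsin0 : 0 < Real.sin x := Real.sin_pos_of_pos_of_lt_pi hx0 (by linarith)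
  have hr0 : 0 < r := by rw [hr] at hsin0; exact pos_of_mul_pos_left hsin0 ha.le
  have hs0 : 0 < s := by rw [hs] at hx0; exact pos_of_mul_pos_left hx0 ha.le
  have hc : 0 ≤ Real.cos x := Real.cos_nonneg_of_neg_pi_div_two_le_of_le (by linarith) hx1.le
  have hσ1 : σ ≤ 1 := by
    have := Real.sin_le ha.le
    rw [hσ] at this; nlinarith
  have hσ2 : 1 - a ^ 2 / 4 ≤ σ := by
    have := Real.sin_gt_sub_cube ha
    rw [hσ] at this
    refine le_of_mul_le_mul_right (a := a) ?_ ha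
    have h3 : 0 < a ^ 3 := by positivity
    nlinarith
  have hσ3 : 15 / 16 ≤ σ := by nlinarith
  have hB2 : B * (4 * π * r * (r ^ 2 - σ ^ 2))
      = Real.sin (2 * π * s) * Real.cos x * (3 * r ^ 2 + σ ^ 2) := by
    rw [hsx, hr, hσ] at hB
    have h3 : a ^ 3 ≠ 0 := by positivity
    apply mul_left_cancel₀ h3
    linear_combination hB
  rw [sq_abs]
  rcases lt_or_gt_of_ne hr1 with h | h
  · -- r < 1
    rw [abs_of_neg (by linarith)] at hsm
    have hrσ : r < σ := by nlinarith
    have hxa : x < a := by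
      by_contra hxa
      push Not at hxa
      have := Real.sin_le_sin_of_le_of_le_pi_div_two (by linarith) hx1.le hxa
      rw [hr, hσ] at this
      linarith [le_of_mul_le_mul_right this ha]
    have hs1 : s < 1 := by rw [← hsx, div_lt_one ha]; exact hxa
    obtain ⟨m1, m2⟩ := dff_mv x a hx0.le hxa (by linarith)
    obtain ⟨n1, n2⟩ := dff_mv 0 x le_rfl hx0 hx1.le
    rw [Real.sin_zero, Real.cos_zero, hr] at n2
    rw [Real.sin_zero, hr] at n1
    rw [hr, hσ] at m1 m2
    have hc1 := Real.cos_le_one x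
    have n1' : s * Real.cos x ≤ r := by
      refine le_of_mul_le_mul_right (a := a) ?_ ha
      have : (x - 0) * Real.cos x = s * Real.cos x * a := by rw [sub_zero]; nth_rewrite 1 [hs]; ring
      linarith
    have n2' : r ≤ s := by nlinarith
    rcases le_total s (1 / 2) with hh | hh
    · obtain ⟨q1, q2⟩ := dff_sin s hs0.le hh
      have := dff_low r σ (Real.sin (2 * π * s)) (Real.cos x) s (-B) hr0 hσ3 hσ1 hh hc n1' n2' q1 q2
        (by linarith)
      rw [abs_neg] at this
      refine this.trans (le_max_of_le_left ?_)
      nlinarith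
    · refine le_max_of_le_left ?_
      have e : Real.sin (2 * π * s) = - Real.sin (2 * π * (1 - s)) := by
        rw [← Real.sin_neg, ← Real.sin_add_two_pi (-(2 * π * (1 - s)))]; congr 1; ring
      obtain ⟨q1, q2⟩ := dff_sin (1 - s) (by linarith) (by linarith)
      have hxs : a - x = (1 - s) * a := by rw [hs]; ring
      rw [hxs] at m1 m2
      have hcos := Real.one_sub_sq_div_two_le_cos (x := a)
      have hu : 0 < 1 - s := by linarith
      have m1' : (1 - s) * Real.cos a ≤ σ - r := by
        refine le_of_mul_le_mul_right (a := a) ?_ ha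
        linarith
      have m2' : σ - r ≤ (1 - s) * Real.cos x := by
        refine le_of_mul_le_mul_right (a := a) ?_ ha
        linarith
      have hconc : σ / 2 ≤ r := by
        have : s * σ ≤ r := by
          linarith [mul_le_mul_of_nonneg_left m2' hs0.le, mul_le_mul_of_nonneg_left n1' hu.le]
        have : 1 / 2 * σ ≤ s * σ := mul_le_mul_of_nonneg_right hh (by linarith)
        linarith
      exact dff_near2 a r σ (Real.sin (2 * π * (1 - s))) (Real.cos x) (1 - s) B ha (by linarith) hr0
        hσ2 hσ1 hconc hu (by linarith) hc hc1 ((mul_le_mul_of_nonneg_left hcos hu.le).trans m1')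
        (m2'.trans (mul_le_of_le_one_right hu.le hc1)) q1 q2
        (by rw [e] at hB2; linarith)
  · -- r > 1
    have hxa : a < x := by
      by_contra hxa
      push Not at hxa
      have := Real.sin_le_sin_of_le_of_le_pi_div_two (by linarith) (by linarith) hxa
      rw [hr, hσ] at this
      linarith [le_of_mul_le_mul_right this ha]
    have hs1 : 1 < s := by rw [← hsx, one_lt_div ha]; exact hxa
    obtain ⟨m1, m2⟩ := dff_mv a x ha.le hxa hx1.le
    rw [hr, hσ] at m1 m2
    have hxs : x - a = (s - 1) * a := by rw [hs]; ring
    rw [hxs] at m1 m2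
    have hca := Real.cos_le_one a
    have m1' : (s - 1) * Real.cos x ≤ r - σ := by
      refine le_of_mul_le_mul_right (a := a) ?_ ha
      linarith
    have m2' : r - σ ≤ (s - 1) * Real.cos a := by
      refine le_of_mul_le_mul_right (a := a) ?_ ha
      linarith
    rcases le_total (s - 1) (1 / 2) with hh | hh
    · refine le_max_of_le_left ?_
      have e : Real.sin (2 * π * s) = Real.sin (2 * π * (s - 1)) := by
        rw [← Real.sin_add_two_pi (2 * π * (s - 1))]; congr 1; ring
      obtain ⟨q1, q2⟩ := dff_sin (s - 1) (by linarith) (by linarith)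
      rw [e] at hB2
      exact dff_near1 r σ _ _ (s - 1) B h (by linarith) hσ1 (by linarith) hh hc m1'
        (m2'.trans (mul_le_of_le_one_right (by linarith) hca)) q1 q2 hB2
    · refine le_max_of_le_right ?_
      have h15 : 3 / 2 * a ≤ x := by rw [hs]; exact mul_le_mul_of_nonneg_right (by linarith) ha.le
      have l1 := Real.sin_le_sin_of_le_of_le_pi_div_two (by linarith) hx1.le h15
      have l2 := Real.sin_gt_sub_cube (x := 3 / 2 * a) (by linarith)
      rw [hr] at l1
      have hr128 : 1.28 ≤ r := by
        refine le_of_mul_le_mul_right (a := a) ?_ ha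
        have : a ^ 3 ≤ a * (1 / 4) := by nlinarith [mul_le_mul_of_nonneg_left ha1 ha.le]
        nlinarith
      refine dff_far r σ _ B hr128 (by linarith) hσ1 ?_ hB2
      rw [abs_mul]
      exact mul_le_one₀ (Real.abs_sin_le_one _) (abs_nonneg _) (Real.abs_cos_le_one _)

/-- Bound on the discrete filter transfer factor `β_h(λ̃)` used to prove
convergence of the discrete EM-WaveHoltz iteration. -/
theorem discrete_filter_factor_bound
    (ω lam : ℝ) (hω : 0 < ω) (hlam : 0 < lam)
    (δ : ℝ) (hδ : δ = |lam - ω| / ω) (hδ_pos : 0 < δ)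
    (Δt : ℝ) (hΔt : 0 < Δt)
    (M : ℕ) (hM : 0 < M) (hT : 2 * π / ω = (M : ℝ) * Δt)
    (hCFL : Δt ≤ 2 / (lam + 2 * ω / π))
    (hsmall : ω * Δt ≤ min δ 1)
    (lamt : ℝ) (hlamt : lamt = (2 / Δt) * Real.arcsin (lam * Δt / 2))
    (η : ℕ → ℝ) (hη : ∀ n, η n = if n = 0 ∨ n = M then (1 / 2 : ℝ) else 1)
    (βh : ℝ → ℝ)
    (hβh : ∀ μ, βh μ = (2 * Δt / (2 * π / ω)) *
      ∑ n ∈ Finset.range (M + 1),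
        η n * Real.cos (μ * n * Δt) * (Real.cos (ω * n * Δt) - 1 / 4)) :
    |βh lamt| ≤ max (1 - 0.3 * δ ^ 2) 0.63 := by
  have hp := Real.pi_pos
  have hp3 := Real.pi_gt_three
  have hM' : (0 : ℝ) < M := by exact_mod_cast hM
  obtain ⟨hs1, hs2⟩ := le_min_iff.1 hsmall
  obtain ⟨a, ha⟩ : ∃ a, a = ω * Δt / 2 := ⟨_, rfl⟩
  obtain ⟨x, hx⟩ : ∃ x, x = Real.arcsin (lam * Δt / 2) := ⟨_, rfl⟩
  have ha0 : 0 < a := by rw [ha]; positivity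
  have hMa : M * a = π := by
    rw [ha]; field_simp at hT; linarith
  have hlt : lam * Δt / 2 < 1 := by
    rw [le_div_iff₀ (by positivity)] at hCFL
    have : 0 < Δt * (2 * ω / π) := by positivity
    nlinarith
  have hl0 : 0 < lam * Δt / 2 := by positivity
  have hsinx : Real.sin x = lam * Δt / 2 := by
    rw [hx]; exact Real.sin_arcsin (by linarith) hlt.le
  have hx0 : 0 < x := by rw [hx]; exact Real.arcsin_pos.2 hl0
  have hx1 : x < π / 2 := by rw [hx]; exact Real.arcsin_lt_pi_div_two.2 hlt
  have hr : Real.sin x = (lam / ω) * a := by rw [hsinx, ha]; field_simp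
  have hδr : δ = |lam / ω - 1| := by
    rw [hδ]
    nth_rewrite 2 [← abs_of_pos hω]
    rw [← abs_div]; congr 1; field_simp
  have hr1 : lam / ω ≠ 1 := by
    intro h; rw [h] at hδr; simp at hδr; linarith
  rw [hδr]
  have hsa : 0 < Real.sin a := Real.sin_pos_of_pos_of_lt_pi ha0 (by linarith)
  have hsx : 0 < Real.sin x := Real.sin_pos_of_pos_of_lt_pi hx0 (by linarith)
  refine dff_core a x (lam / ω) (βh lamt) ha0 (by linarith) hx0 hx1 hr hr1 (by linarith) ?_
  have hcoef : 2 * Δt / (2 * π / ω) = 2 / M := by rw [hT]; field_simp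
  obtain ⟨S, hS⟩ : ∃ S : ℝ → ℝ, S = fun φ => ∑ n ∈ Finset.range M,
    (Real.cos (φ * n) + Real.cos (φ * (n + 1))) := ⟨_, rfl⟩
  have hsum : βh lamt = (2 / M) * (1 / 4 * S (2 * (x + a)) + 1 / 4 * S (2 * (x - a))
      - 1 / 8 * S (2 * x)) := by
    rw [hβh, hcoef]
    congr 1
    have := dff_weights M hM η hη
      (fun n => Real.cos (lamt * n * Δt) * (Real.cos (ω * n * Δt) - 1 / 4))
    simp only [← mul_assoc] at this
    rw [this, hS]
    simp only [Finset.mul_sum, Finset.sum_div]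
    rw [← Finset.sum_add_distrib, ← Finset.sum_sub_distrib]
    have key : ∀ t : ℝ, Real.cos (lamt * t * Δt) * (Real.cos (ω * t * Δt) - 1 / 4)
        = 1 / 2 * Real.cos (2 * (x + a) * t) + 1 / 2 * Real.cos (2 * (x - a) * t)
          - 1 / 4 * Real.cos (2 * x * t) := by
      intro t
      have e1 : lamt * t * Δt = 2 * x * t := by rw [hlamt, ← hx]; field_simp
      have e2 : ω * t * Δt = 2 * a * t := by rw [ha]; ring
      have e3 : 2 * (x + a) * t = 2 * x * t + 2 * a * t := by ring
      have e4 : 2 * (x - a) * t = 2 * x * t - 2 * a * t := by ring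
      rw [e1, e2, e3, e4, Real.cos_add, Real.cos_sub]; ring
    refine Finset.sum_congr rfl fun n _ => ?_
    have k1 := key n
    have k2 := key ((n + 1 : ℕ) : ℝ)
    rw [k1, k2]
    push_cast
    ring
  have t1 := dff_trap (2 * (x + a)) M
  have t2 := dff_trap (2 * (x - a)) M
  have t3 := dff_trap (2 * x) M
  have f1 : (M : ℝ) * (2 * (x + a)) = M * (2 * x) + 2 * π := by rw [← hMa]; ring
  have f2 : (M : ℝ) * (2 * (x - a)) = M * (2 * x) - 2 * π := by rw [← hMa]; ring
  rw [f1, Real.sin_add_two_pi] at t1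
  rw [f2, Real.sin_sub_two_pi] at t2
  have g1 : 2 * (x + a) / 2 = x + a := by ring
  have g2 : 2 * (x - a) / 2 = x - a := by ring
  have g3 : 2 * x / 2 = x := by ring
  rw [g1] at t1
  rw [g2] at t2
  rw [g3] at t3
  have u1 : S (2 * (x + a)) * Real.sin (x + a) = Real.sin (M * (2 * x)) * Real.cos (x + a) := by
    rw [hS]; exact t1
  have u2 : S (2 * (x - a)) * Real.sin (x - a) = Real.sin (M * (2 * x)) * Real.cos (x - a) := by
    rw [hS]; exact t2
  have u3 : S (2 * x) * Real.sin x = Real.sin (M * (2 * x)) * Real.cos x := by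
    rw [hS]; exact t3
  have hMx : 2 * π * (x / a) = M * (2 * x) := by rw [← hMa]; field_simp
  have hpm : Real.sin x ^ 2 - Real.sin a ^ 2 = Real.sin (x + a) * Real.sin (x - a) := by
    rw [Real.sin_add, Real.sin_sub]
    linear_combination (-Real.sin x ^ 2) * Real.sin_sq_add_cos_sq a
      + (Real.sin a ^ 2) * Real.sin_sq_add_cos_sq x
  have hcc : Real.sin (x - a) * Real.cos (x + a) + Real.sin (x + a) * Real.cos (x - a)
      = 2 * Real.sin x * Real.cos x := by
    have h := Real.sin_add (x - a) (x + a)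
    have h' : x - a + (x + a) = 2 * x := by ring
    rw [h', Real.sin_two_mul] at h
    linarith
  have h2M : 2 / (M : ℝ) * π = 2 * a := by rw [← hMa]; field_simp
  rw [hMx, hsum]
  generalize Real.sin (M * (2 * x)) = Z at *
  generalize S (2 * (x + a)) = A1 at *
  generalize S (2 * (x - a)) = A2 at *
  generalize S (2 * x) = A3 at *
  have big : 4 * Real.sin x * (Real.sin x ^ 2 - Real.sin a ^ 2) *
      (1 / 4 * A1 + 1 / 4 * A2 - 1 / 8 * A3) * 2
      = Z * Real.cos x * (3 * Real.sin x ^ 2 + Real.sin a ^ 2) := by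
    have v : (Real.sin x ^ 2 - Real.sin a ^ 2) * (A1 + A2) = Z * (2 * Real.sin x * Real.cos x) := by
      rw [hpm, ← hcc]
      linear_combination Real.sin (x - a) * u1 + Real.sin (x + a) * u2
    linear_combination (2 * Real.sin x) * v - (Real.sin x ^ 2 - Real.sin a ^ 2) * u3
  linear_combination a * big + (4 * Real.sin x * (Real.sin x ^ 2 - Real.sin a ^ 2) *
      (1 / 4 * A1 + 1 / 4 * A2 - 1 / 8 * A3)) * h2M
end

section
/- Let ω > 0 and T := 2π/ω, and define the filter transfer function β(λ) := (2/T) ∫_0^T (cos(ω t) − 1/4) cos(λ t) dt for λ ≥ 0. Then β(0) = −1/2, and for every λ > 0 with λ ≠ ω one has |β(λ)| < 1. -/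
open Real MeasureTheory intervalIntegral

lemma sin_aux (u : ℝ) (h0 : 0 ≤ u) (h1 : u ≤ 1/2) :
    0 ≤ Real.sin (2*π*u) ∧ Real.sin (2*π*u) ≤ 2*π*u*(1-2*u^2) := by
  have hp := Real.pi_pos
  constructor
  · apply Real.sin_nonneg_of_nonneg_of_le_pi
    · positivity
    · nlinarith
  · have e : 2*π*u = 2*(π*u) := by ring
    rw [e, Real.sin_two_mul]
    have hs : Real.sin (π*u) ≤ π*u := Real.sin_le (by positivity)
    have hc0 : 0 ≤ Real.cos (π*u) := by
      apply Real.cos_nonneg_of_neg_pi_div_two_le_of_le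
      · have : 0 ≤ π*u := by positivity
        linarith
      · nlinarith
    have hc : Real.cos (π*u) ≤ 1 - 2/π^2*(π*u)^2 := by
      apply Real.cos_le_one_sub_mul_cos_sq
      rw [abs_of_nonneg (by positivity)]; nlinarith
    have e2 : 2/π^2*(π*u)^2 = 2*u^2 := by field_simp
    rw [e2] at hc
    have h3 := mul_le_mul_of_nonneg_right hs hc0
    have h4 := mul_le_mul_of_nonneg_left hc (show 0 ≤ π*u by positivity)
    nlinarith

lemma core_aux (r : ℝ) (h0 : 0 < r) (h1 : r ≠ 1) :
    |Real.sin (2*π*r)| * (3*r^2+1) < 4*π*r*|r^2-1| := by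
  have hp := Real.pi_gt_three
  have key : ∀ u : ℝ, |Real.sin (2*π*r)| ≤ 2*π*u*(1-2*u^2) →
      (1-2*u^2)*(3*r^2+1)*u < 2*r*|r^2-1| →
      |Real.sin (2*π*r)| * (3*r^2+1) < 4*π*r*|r^2-1| := by
    intro u hu hlt
    have h2 := mul_le_mul_of_nonneg_right hu (show 0 ≤ 3*r^2+1 by positivity)
    have h3 := mul_lt_mul_of_pos_left hlt (show 0 < 2*π by positivity)
    linarith
  rcases le_or_gt r (1/2) with h | h
  · obtain ⟨a, b⟩ := sin_aux r h0.le h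
    apply key r
    · rwa [abs_of_nonneg a]
    · rw [abs_of_neg (by nlinarith)]
      have : 0 < 6*r^4-3*r^2+1 := by nlinarith [sq_nonneg (r^2-1/4)]
      nlinarith [mul_pos h0 this]
  rcases lt_or_gt_of_ne h1 with h' | h'
  · obtain ⟨a, b⟩ := sin_aux (1-r) (by linarith) (by linarith)
    have e : Real.sin (2*π*r) = - Real.sin (2*π*(1-r)) := by
      rw [show 2*π*(1-r) = 2*π - 2*π*r by ring, Real.sin_two_pi_sub]; ring
    apply key (1-r)
    · rwa [e, abs_neg, abs_of_nonneg a]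
    · rw [abs_of_neg (by nlinarith)]
      have : 0 < 2*r*(1+r) - (1-2*(1-r)^2)*(3*r^2+1) := by
        have e : 2*r*(1+r) - (1-2*(1-r)^2)*(3*r^2+1) = (1-r)^2*(6*r^2+1) := by ring
        rw [e]; have : 0 < 1 - r := by linarith
        positivity
      nlinarith [mul_pos (show 0 < 1-r by linarith) this]
  rcases le_or_gt r (3/2) with h'' | h''
  · obtain ⟨a, b⟩ := sin_aux (r-1) (by linarith) (by linarith)
    have e : Real.sin (2*π*r) = Real.sin (2*π*(r-1)) := by
      rw [show 2*π*(r-1) = 2*π*r - 2*π by ring, Real.sin_sub_two_pi]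
    apply key (r-1)
    · rwa [e, abs_of_nonneg a]
    · rw [abs_of_pos (by nlinarith)]
      have : 0 < 2*r*(1+r) - (1-2*(1-r)^2)*(3*r^2+1) := by
        have e : 2*r*(1+r) - (1-2*(1-r)^2)*(3*r^2+1) = (r-1)^2*(6*r^2+1) := by ring
        rw [e]; have : 0 < r-1 := by linarith
        positivity
      nlinarith [mul_pos (show 0 < r-1 by linarith) this]
  · rw [abs_of_pos (show 0 < r^2-1 by nlinarith)]
    have h2 := mul_le_mul_of_nonneg_right (Real.abs_sin_le_one (2*π*r))
      (show 0 ≤ 3*r^2+1 by positivity)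
    have h3 : 0 < r*(r^2-1) := mul_pos h0 (by nlinarith)
    have h4 : 3*(r*(r^2-1)) ≤ π*(r*(r^2-1)) := mul_le_mul_of_nonneg_right hp.le h3.le
    have h5 : 3/2*(r^2-1) ≤ r*(r^2-1) := mul_le_mul_of_nonneg_right h''.le (by nlinarith)
    nlinarith

lemma int_aux (a b T : ℝ) (hb : b ≠ 0) (hs : a + b ≠ 0) (hd : a - b ≠ 0) :
    ∫ t in (0:ℝ)..T, (Real.cos (a * t) - 1 / 4) * Real.cos (b * t) =
      (Real.sin ((a+b)*T)/(a+b) + Real.sin ((a-b)*T)/(a-b))/2 - Real.sin (b*T)/(4*b) := by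
  have hl : ∀ c t : ℝ, HasDerivAt (fun t => Real.sin (c*t)) (Real.cos (c*t) * c) t := by
    intro c t
    have := ((hasDerivAt_id t).const_mul c).sin
    simpa using this
  rw [integral_eq_sub_of_hasDerivAt (f := fun t => (Real.sin ((a+b)*t)/(a+b) + Real.sin ((a-b)*t)/(a-b))/2 - Real.sin (b*t)/(4*b))]
  · simp
  · intro t _
    have := ((((hl (a+b) t).div_const (a+b)).add ((hl (a-b) t).div_const (a-b))).div_const 2).sub
      ((hl b t).div_const (4*b))
    refine HasDerivAt.congr_deriv this ?_
    rw [mul_div_cancel_right₀ _ hs, mul_div_cancel_right₀ _ hd, add_mul, sub_mul, Real.cos_add, Real.cos_sub]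
    field_simp
    ring
  · apply Continuous.intervalIntegrable
    fun_prop

/-- The WaveHoltz filter transfer function satisfies `β(0) = -1/2` and is a
strict contraction factor, `|β(λ)| < 1`, on every nonresonant mode `λ ≠ ω`. -/
theorem filter_transfer_contraction
    (ω : ℝ) (hω : 0 < ω) (T : ℝ) (hT : T = 2 * π / ω)
    (β : ℝ → ℝ)
    (hβ : ∀ lam, β lam =
      (2 / T) * ∫ t in (0 : ℝ)..T, (Real.cos (ω * t) - 1 / 4) * Real.cos (lam * t)) :
    β 0 = -(1 / 2) ∧ ∀ lam : ℝ, 0 < lam → lam ≠ ω → |β lam| < 1 := by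
  have hp := Real.pi_pos
  have hTp : 0 < T := by rw [hT]; positivity
  have hωT : ω * T = 2*π := by rw [hT]; field_simp
  constructor
  · rw [hβ]
    have : ∫ t in (0 : ℝ)..T, (Real.cos (ω * t) - 1 / 4) * Real.cos (0 * t) = -(T/4) := by
      rw [integral_eq_sub_of_hasDerivAt (f := fun t => Real.sin (ω*t)/ω - t/4)]
      · simp [hωT]
      · intro t _
        have := (((hasDerivAt_id t).const_mul ω).sin.div_const ω).sub
          ((hasDerivAt_id t).div_const 4)
        refine HasDerivAt.congr_deriv this ?_
        simp [hω.ne']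
      · apply Continuous.intervalIntegrable
        fun_prop
    rw [this]; field_simp; norm_num
  · intro lam hl hne
    have hd : ω - lam ≠ 0 := sub_ne_zero.mpr hne.symm
    have hs : ω + lam ≠ 0 := by positivity
    rw [hβ, int_aux ω lam T hl.ne' hs hd, add_mul, sub_mul, hωT]
    have hr : 0 < lam/ω := by positivity
    have hr1 : lam/ω ≠ 1 := by
      intro h; exact hne ((div_eq_one_iff_eq hω.ne').mp h)
    have hc := core_aux (lam/ω) hr hr1
    have hlam : lam = (lam/ω)*ω := by field_simp
    generalize lam/ω = r at *
    subst hlam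
    have e : r*ω*T = 2*π*r := by rw [mul_assoc, hωT]; ring
    rw [e, add_comm (2*π), Real.sin_add_two_pi, Real.sin_two_pi_sub]
    have hq : r^2-1 ≠ 0 := by
      intro h
      apply hr1
      nlinarith
    have h1 : 1 + r ≠ 0 := by positivity
    have h2 : 1 - r ≠ 0 := sub_ne_zero.mpr hr1.symm
    have e1 : ω + r*ω = ω*(1+r) := by ring
    have e2 : ω - r*ω = ω*(1-r) := by ring
    have eq : 2 / T * ((Real.sin (2*π*r) / (ω + r*ω) + -Real.sin (2*π*r) / (ω - r*ω)) / 2 -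
        Real.sin (2*π*r) / (4 * (r*ω))) = Real.sin (2*π*r) * (3*r^2+1) / (4*π*r*(r^2-1)) := by
      rw [e1, e2, hT, show r^2-1 = -((1+r)*(1-r)) by ring]
      field_simp
      ring
    rw [eq, abs_div, abs_mul, abs_mul, abs_of_pos (show 0 < 3*r^2+1 by positivity),
      abs_of_pos (show 0 < 4*π*r by positivity), div_lt_one (by positivity)]
    exact hc
end

section
/- Let λ > 0, ω > 0 with λ ≠ ω, and Δt > 0 with λ Δt < 2 and ω Δt < 2, and let f, ν ∈ ℝ. Define λ̃ := (2/Δt) arcsin(λ Δt/2) and ω̄ := (2/Δt) arcsin(ω Δt/2), and set ν^∞ := ω f / (ω² − λ²). Define the sequence (u^n) by u^0 = ν, u^1 = (1 − λ² Δt²/2) ν − (ω Δt²/2) f, and u^{n+1} = 2 u^n − u^{n−1} − Δt² λ² u^n − Δt² ω cos(ω̄ n Δt) f for n ≥ 1. Then for every n ≥ 0, u^n = (ν − ν^∞) cos(λ̃ n Δt) + ν^∞ cos(ω̄ n Δt). -/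
open Real

theorem lf_cos_one (a d b : ℝ) (ha : 0 < a) (hd : 0 < d) (h : a * d < 2)
    (hb : b = (2 / d) * Real.arcsin (a * d / 2)) :
    Real.cos (b * d) = 1 - a ^ 2 * d ^ 2 / 2 := by
  have h0 : 0 < a * d := mul_pos ha hd
  have e : b * d = 2 * Real.arcsin (a * d / 2) := by
    rw [hb]; field_simp
  rw [e, Real.cos_two_mul, Real.cos_sq', Real.sin_arcsin (by linarith) (by linarith)]
  ring

theorem lf_cos_rec (b d : ℝ) (k : ℕ) :
    Real.cos (b * ((k + 2 : ℕ) : ℝ) * d) =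
      2 * Real.cos (b * d) * Real.cos (b * ((k + 1 : ℕ) : ℝ) * d)
        - Real.cos (b * (k : ℝ) * d) := by
  have e1 : b * ((k + 2 : ℕ) : ℝ) * d = b * ((k + 1 : ℕ) : ℝ) * d + b * d := by
    push_cast; ring
  have e2 : b * (k : ℝ) * d = b * ((k + 1 : ℕ) : ℝ) * d - b * d := by
    push_cast; ring
  rw [e1, e2, Real.cos_add, Real.cos_sub]
  ring

/-- Elimination of the temporal error: driving the leapfrog scheme with the
modified frequency `ω̄ = (2/Δt) arcsin(ω Δt/2)` makes the steady component of
the discrete mode equal to the exact frequency-domain coefficient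
`ν^∞ = ω f/(ω² - λ²)`. -/
theorem leapfrog_mode_modified_forcing
    (lam ω : ℝ) (hlam : 0 < lam) (hω : 0 < ω) (hne : lam ≠ ω)
    (Δt : ℝ) (hΔt : 0 < Δt) (hcfl1 : lam * Δt < 2) (hcfl2 : ω * Δt < 2)
    (f ν : ℝ)
    (lamt : ℝ) (hlamt : lamt = (2 / Δt) * Real.arcsin (lam * Δt / 2))
    (ωbar : ℝ) (hωbar : ωbar = (2 / Δt) * Real.arcsin (ω * Δt / 2))
    (νinf : ℝ) (hνinf : νinf = ω * f / (ω ^ 2 - lam ^ 2))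
    (u : ℕ → ℝ)
    (hu0 : u 0 = ν)
    (hu1 : u 1 = (1 - lam ^ 2 * Δt ^ 2 / 2) * ν - (ω * Δt ^ 2 / 2) * f)
    (hurec : ∀ n, 1 ≤ n → u (n + 1) =
      2 * u n - u (n - 1) - Δt ^ 2 * lam ^ 2 * u n
        - Δt ^ 2 * ω * Real.cos (ωbar * n * Δt) * f) :
    ∀ n : ℕ, u n = (ν - νinf) * Real.cos (lamt * n * Δt)
      + νinf * Real.cos (ωbar * n * Δt) := by
  have hL := lf_cos_one lam Δt lamt hlam hΔt hcfl1 hlamt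
  have hW := lf_cos_one ω Δt ωbar hω hΔt hcfl2 hωbar
  have hD : ω ^ 2 - lam ^ 2 ≠ 0 := by
    intro h
    have h2 : (ω - lam) * (ω + lam) = 0 := by linarith
    rcases mul_eq_zero.mp h2 with h3 | h3
    · exact hne (by linarith)
    · linarith
  have hB : νinf * (ω ^ 2 - lam ^ 2) = ω * f := by
    rw [hνinf]; field_simp
  intro n
  induction n using Nat.twoStepInduction with
  | zero => simp [hu0]
  | one =>
    simp only [Nat.cast_one, mul_one]
    rw [hu1, hL, hW]
    linear_combination (Δt ^ 2 / 2) * hB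
  | more k ih0 ih1 =>
    have hr := hurec (k + 1) (by omega)
    have e : k + 1 - 1 = k := by omega
    rw [e] at hr
    change u (k + 2) = _ at hr
    rw [lf_cos_rec lamt, lf_cos_rec ωbar, hr, hL, hW, ih0, ih1]
    linear_combination (Δt ^ 2 * Real.cos (ωbar * ((k + 1 : ℕ) : ℝ) * Δt)) * hB
end
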